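/- arXiv:1409.5782 — 2 statements merged into one kernel-verified Lean document; each statement's English description precedes it below -/
import Mathlib

section
/- Let H ⊂ ℝⁿ be a Hanner polytope and H° its polar. Then every simple classical closed billiard trajectory in H with geometry given by H° (1) has length 4 measured in the norm ‖q‖_{H°} = max_{p∈H°}⟨p,q⟩, (2) bounces exactly 2n times (is 2n-periodic), and (3) is centrally symmetric with respect to the origin, with centrally symmetric momentum trajectory: q_i = −q_{i+n} and p_i = −p_{i+n} for all i (indices mod 2n). -/
open MeasureTheory
open scoped Pointwise

namespace Billiard

/-- The canonical pairing `⟨p, q⟩ = ∑ i, p i * q i` on `ℝⁿ`. -/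
noncomputable def pairing {n : ℕ} (p q : Fin n → ℝ) : ℝ := ∑ i, p i * q i

/-- The polar set `H° = {p : ⟨p, q⟩ ≤ 1 for all q ∈ H}`. -/
def polarSet {n : ℕ} (H : Set (Fin n → ℝ)) : Set (Fin n → ℝ) :=
  {p | ∀ q ∈ H, pairing p q ≤ 1}

/-- The support function of `T`, i.e. the norm `‖v‖_{T} = max_{p ∈ T} ⟨p, v⟩`. -/
noncomputable def suppFn {n : ℕ} (T : Set (Fin n → ℝ)) (v : Fin n → ℝ) : ℝ :=
  sSup ((fun p => pairing p v) '' T)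

/-- Projection of `ℝ^{k+l}` onto the first `k` coordinates. -/
def splitL {k l : ℕ} (x : Fin (k + l) → ℝ) : Fin k → ℝ := fun i => x (Fin.castAdd l i)

/-- Projection of `ℝ^{k+l}` onto the last `l` coordinates. -/
def splitR {k l : ℕ} (x : Fin (k + l) → ℝ) : Fin l → ℝ := fun j => x (Fin.natAdd k j)

/-- `K ⊕_∞ L = K × L ⊂ ℝ^{k+l}`. -/
def sumInfty {k l : ℕ} (K : Set (Fin k → ℝ)) (L : Set (Fin l → ℝ)) :
    Set (Fin (k + l) → ℝ) :=
  {x | splitL x ∈ K ∧ splitR x ∈ L}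

/-- `K ⊕₁ L = conv((K × {0}) ∪ ({0} × L)) ⊂ ℝ^{k+l}`. -/
def sumOne {k l : ℕ} (K : Set (Fin k → ℝ)) (L : Set (Fin l → ℝ)) :
    Set (Fin (k + l) → ℝ) :=
  convexHull ℝ ({x | splitL x ∈ K ∧ splitR x = 0} ∪ {x | splitL x = 0 ∧ splitR x ∈ L})

/-- Hanner polytopes, defined inductively: the segment `[-1,1] ⊂ ℝ` is a Hanner polytope,
and `K ⊕_∞ L`, `K ⊕₁ L` are Hanner polytopes whenever `K`, `L` are. -/
inductive IsHanner : ∀ n : ℕ, Set (Fin n → ℝ) → Prop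
  | segment : IsHanner 1 {x | |x 0| ≤ 1}
  | inftySum {k l : ℕ} {K : Set (Fin k → ℝ)} {L : Set (Fin l → ℝ)} :
      IsHanner k K → IsHanner l L → IsHanner (k + l) (sumInfty K L)
  | oneSum {k l : ℕ} {K : Set (Fin k → ℝ)} {L : Set (Fin l → ℝ)} :
      IsHanner k K → IsHanner l L → IsHanner (k + l) (sumOne K L)

/-- `u` is the outer normal of the facet of `H` containing `q`, normalized to lie in `∂H°`:
`u ∈ H°`, `⟨u, q⟩ = 1`, and `u` is the unique such vector. The uniqueness encodes that `q`
lies in the relative interior of a facet of the polytope `H`. -/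
def IsUniqueNormal {n : ℕ} (H : Set (Fin n → ℝ)) (q u : Fin n → ℝ) : Prop :=
  u ∈ polarSet H ∧ pairing u q = 1 ∧ ∀ v ∈ polarSet H, pairing v q = 1 → v = u

/-- A classical closed billiard trajectory in the configuration `H × T` (with `T = H°`):
closed `m`-periodic sequences of coordinates `q i ∈ ∂H` and momenta `p i ∈ ∂T`, each in
the relative interior of a facet (encoded by uniqueness of the normalized outer normal),
satisfying the reflection rule `p (i+1) − p i = −λ i • n_H(q i)` with `λ i > 0` and the
motion rule `q (i+1) − q i = μ i • n_T(p (i+1))` with `μ i > 0`. -/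
structure ClassicalTraj (n : ℕ) (H T : Set (Fin n → ℝ)) where
  m : ℕ
  m_pos : 0 < m
  q : ℕ → Fin n → ℝ
  p : ℕ → Fin n → ℝ
  nq : ℕ → Fin n → ℝ
  np : ℕ → Fin n → ℝ
  lam : ℕ → ℝ
  mu : ℕ → ℝ
  q_mem : ∀ i, q i ∈ frontier H
  p_mem : ∀ i, p i ∈ frontier T
  q_periodic : ∀ i, q (i + m) = q i
  p_periodic : ∀ i, p (i + m) = p i
  nq_spec : ∀ i, IsUniqueNormal H (q i) (nq i)
  np_spec : ∀ i, IsUniqueNormal T (p i) (np i)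
  lam_pos : ∀ i, 0 < lam i
  mu_pos : ∀ i, 0 < mu i
  reflection : ∀ i, p (i + 1) - p i = (-(lam i)) • nq i
  motion : ∀ i, q (i + 1) - q i = mu i • np (i + 1)

/-- A trajectory is simple if it does not traverse the same closed route more than once,
i.e. it has no period smaller than `m`. -/
def ClassicalTraj.IsSimple {n : ℕ} {H T : Set (Fin n → ℝ)}
    (τ : ClassicalTraj n H T) : Prop :=
  ∀ d : ℕ, 0 < d → d < τ.m → ¬(∀ i, τ.q (i + d) = τ.q i ∧ τ.p (i + d) = τ.p i)

/-- The length of the trajectory, measured in the norm `‖·‖_T` with `T = H°`. -/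
noncomputable def ClassicalTraj.length {n : ℕ} {H T : Set (Fin n → ℝ)}
    (τ : ClassicalTraj n H T) : ℝ :=
  ∑ i ∈ Finset.range τ.m, suppFn T (τ.q (i + 1) - τ.q i)

/-- The trace of a trajectory in phase space `∂H × ∂T`: the union of the segments swept by
the coordinate while the momentum is constant, and by the momentum while the coordinate is
constant. -/
noncomputable def ClassicalTraj.trace {n : ℕ} {H T : Set (Fin n → ℝ)}
    (τ : ClassicalTraj n H T) : Set ((Fin n → ℝ) × (Fin n → ℝ)) :=
  ⋃ i ∈ Finset.range τ.m,
    ((fun x => (x, τ.p (i + 1))) '' segment ℝ (τ.q i) (τ.q (i + 1)) ∪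
      (fun y => (τ.q i, y)) '' segment ℝ (τ.p i) (τ.p (i + 1)))

/-- The coordinate polygonal line of a trajectory, as a subset of `∂H`. -/
noncomputable def ClassicalTraj.coordTrace {n : ℕ} {H T : Set (Fin n → ℝ)}
    (τ : ClassicalTraj n H T) : Set (Fin n → ℝ) :=
  ⋃ i ∈ Finset.range τ.m, segment ℝ (τ.q i) (τ.q (i + 1))

/-- The momentum polygonal line of a trajectory, as a subset of `∂T`. -/
noncomputable def ClassicalTraj.momTrace {n : ℕ} {H T : Set (Fin n → ℝ)}
    (τ : ClassicalTraj n H T) : Set (Fin n → ℝ) :=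
  ⋃ i ∈ Finset.range τ.m, segment ℝ (τ.p i) (τ.p (i + 1))

end Billiard

namespace Billiard

open Matrix

/-- `u` is the only vector of `T` whose pairing with `q` equals `1`. -/
def IsNormal {n : ℕ} (T : Set (Fin n → ℝ)) (q u : Fin n → ℝ) : Prop :=
  u ∈ T ∧ u ⬝ᵥ q = 1 ∧ ∀ v ∈ T, v ⬝ᵥ q = 1 → v = u

theorem IsNormal.unique {n : ℕ} {T : Set (Fin n → ℝ)} {q u v : Fin n → ℝ}
    (hu : IsNormal T q u) (hv : IsNormal T q v) : u = v :=
  hv.2.2 u hu.1 hu.2.1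

theorem IsNormal.neg {n : ℕ} {T : Set (Fin n → ℝ)} {q u : Fin n → ℝ}
    (hT : ∀ v ∈ T, -v ∈ T) (hu : IsNormal T q u) : IsNormal T (-q) (-u) := by
  refine ⟨hT u hu.1, by simp [hu.2.1], fun v hv h => ?_⟩
  rw [← hu.2.2 (-v) (hT v hv) (by simpa using h), neg_neg]

/-- A pair of mutually polar, centrally symmetric sets in `ℝⁿ`, `n > 0`, each of which
contains the standard basis. -/
structure PolarPair (n : ℕ) (H T : Set (Fin n → ℝ)) : Prop where
  pos : 0 < n
  mem_right : ∀ p, p ∈ T ↔ ∀ q ∈ H, p ⬝ᵥ q ≤ 1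
  mem_left : ∀ q, q ∈ H ↔ ∀ p ∈ T, p ⬝ᵥ q ≤ 1
  neg_left : ∀ q ∈ H, -q ∈ H
  single_left : ∀ i, Pi.single i 1 ∈ H
  single_right : ∀ i, Pi.single i 1 ∈ T

namespace PolarPair

variable {n : ℕ} {H T : Set (Fin n → ℝ)}

theorem neg_right (h : PolarPair n H T) : ∀ p ∈ T, -p ∈ T := by
  intro p hp
  rw [h.mem_right] at hp ⊢
  intro q hq
  simpa using hp (-q) (h.neg_left q hq)

theorem symm (h : PolarPair n H T) : PolarPair n T H where
  pos := h.pos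
  mem_right p := by simpa only [dotProduct_comm] using h.mem_left p
  mem_left p := by simpa only [dotProduct_comm] using h.mem_right p
  neg_left := h.neg_right
  single_left := h.single_right
  single_right := h.single_left

theorem zero_left (h : PolarPair n H T) : 0 ∈ H :=
  (h.mem_left 0).2 (by simp)

theorem abs_apply_le_one (h : PolarPair n H T) {q : Fin n → ℝ} (hq : q ∈ H) (i : Fin n) :
    |q i| ≤ 1 := by
  have h1 := (h.mem_left q).1 hq _ (h.single_right i)
  have h2 := (h.mem_left q).1 hq _ (h.neg_right _ (h.single_right i))
  rw [single_one_dotProduct] at h1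
  rw [neg_dotProduct, single_one_dotProduct] at h2
  exact abs_le.2 ⟨by linarith, h1⟩

theorem isClosed_left (h : PolarPair n H T) : IsClosed H := by
  have : H = ⋂ p ∈ T, {q | p ⬝ᵥ q ≤ 1} := by
    ext q
    simpa using h.mem_left q
  rw [this]
  refine isClosed_biInter fun p _ => isClosed_le ?_ continuous_const
  exact continuous_const.dotProduct continuous_id

/-- Every vector is a multiple of a point of `H` by the value of its support function. -/
theorem exists_eq_smul (h : PolarPair n H T) (a : Fin n → ℝ) :
    ∃ r : ℝ, 0 ≤ r ∧ ∃ a' ∈ H, a = r • a' ∧ ∀ c, (∀ p ∈ T, p ⬝ᵥ a ≤ c) → r ≤ c := by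
  set A : Set ℝ := (fun p => p ⬝ᵥ a) '' T
  have hne : A.Nonempty := ⟨_, 0, h.symm.zero_left, rfl⟩
  have hbdd : BddAbove A := by
    refine ⟨∑ i, |a i|, ?_⟩
    rintro _ ⟨p, hp, rfl⟩
    refine Finset.sum_le_sum fun i _ => (le_abs_self _).trans ?_
    rw [abs_mul]
    exact mul_le_of_le_one_left (abs_nonneg _) (h.symm.abs_apply_le_one hp i)
  have hle : ∀ p ∈ T, p ⬝ᵥ a ≤ sSup A := fun p hp => le_csSup hbdd ⟨p, hp, rfl⟩
  have h0 : 0 ≤ sSup A := by simpa using hle 0 h.symm.zero_left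
  have hlub : ∀ c, (∀ p ∈ T, p ⬝ᵥ a ≤ c) → sSup A ≤ c := by
    intro c hc
    refine csSup_le hne ?_
    rintro _ ⟨p, hp, rfl⟩
    exact hc p hp
  refine ⟨sSup A, h0, ?_⟩
  rcases h0.eq_or_lt with h0 | h0
  · refine ⟨0, h.zero_left, ?_, hlub⟩
    ext i
    have h1 := hle _ (h.single_right i)
    have h2 := hle _ (h.neg_right _ (h.single_right i))
    rw [single_one_dotProduct] at h1
    rw [neg_dotProduct, single_one_dotProduct] at h2
    simp only [smul_zero, Pi.zero_apply]
    linarith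
  · refine ⟨(sSup A)⁻¹ • a, (h.mem_left _).2 fun p hp => ?_, ?_, hlub⟩
    · rw [dotProduct_smul, smul_eq_mul, inv_mul_le_iff₀ h0, mul_one]
      exact hle p hp
    · rw [smul_inv_smul₀ h0.ne']

end PolarPair

/-- A periodic billiard trajectory in `H × T` for which only some indices (those satisfying
`bounce`) are reflection points; at the other indices the momentum does not change. -/
structure MarkedTraj (n : ℕ) (H T : Set (Fin n → ℝ)) where
  m : ℕ
  m_pos : 0 < m
  bounce : ℕ → Prop
  q : ℕ → Fin n → ℝ
  p : ℕ → Fin n → ℝ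
  nq : ℕ → Fin n → ℝ
  np : ℕ → Fin n → ℝ
  lam : ℕ → ℝ
  mu : ℕ → ℝ
  q_mem : ∀ i, q i ∈ H
  p_mem : ∀ i, p i ∈ T
  q_periodic : ∀ i, q (i + m) = q i
  p_periodic : ∀ i, p (i + m) = p i
  bounce_periodic : ∀ i, bounce (i + m) ↔ bounce i
  nq_spec : ∀ i, bounce i → IsNormal T (q i) (nq i)
  np_spec : ∀ i, IsNormal H (p i) (np i)
  lam_pos : ∀ i, bounce i → 0 < lam i
  mu_pos : ∀ i, 0 < mu i
  reflection : ∀ i, bounce i → p (i + 1) = p i - lam i • nq i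
  no_reflection : ∀ i, ¬ bounce i → p (i + 1) = p i
  motion : ∀ i, q (i + 1) = q i + mu i • np (i + 1)

namespace MarkedTraj

variable {n : ℕ} {H T : Set (Fin n → ℝ)}

/-- The time elapsed between the points `q 0` and `q i`. -/
noncomputable def time (τ : MarkedTraj n H T) (i : ℕ) : ℝ := ∑ j ∈ Finset.range i, τ.mu j

theorem time_zero (τ : MarkedTraj n H T) : τ.time 0 = 0 := by simp [time]

theorem time_succ (τ : MarkedTraj n H T) (i : ℕ) : τ.time (i + 1) = τ.time i + τ.mu i := by
  simp [time, Finset.sum_range_succ]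

theorem time_strictMono (τ : MarkedTraj n H T) : StrictMono τ.time :=
  strictMono_nat_of_lt_succ fun i => by
    rw [time_succ]
    linarith [τ.mu_pos i]

theorem np_congr (τ : MarkedTraj n H T) {i j : ℕ} (h : τ.p i = τ.p j) : τ.np i = τ.np j :=
  (τ.np_spec i).unique (h ▸ τ.np_spec j)

theorem mu_eq (τ : MarkedTraj n H T) (i : ℕ) :
    τ.mu i = (τ.q (i + 1) - τ.q i) ⬝ᵥ τ.p (i + 1) := by
  rw [τ.motion, add_sub_cancel_left, smul_dotProduct, (τ.np_spec _).2.1, smul_eq_mul, mul_one]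

theorem mu_periodic (τ : MarkedTraj n H T) (i : ℕ) : τ.mu (i + τ.m) = τ.mu i := by
  rw [mu_eq, mu_eq, add_right_comm, τ.q_periodic, τ.q_periodic, τ.p_periodic]

theorem time_add_period (τ : MarkedTraj n H T) (i : ℕ) :
    τ.time (i + τ.m) = τ.time i + τ.time τ.m := by
  induction i with
  | zero => simp [time_zero]
  | succ i ih => rw [add_right_comm, time_succ, time_succ, ih, mu_periodic]; ring

theorem eq_of_no_bounce (τ : MarkedTraj n H T) {i j : ℕ} (hij : i ≤ j)
    (h : ∀ h, i ≤ h → h < j → ¬ τ.bounce h) :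
    τ.p j = τ.p i ∧ τ.q j = τ.q i + (τ.time j - τ.time i) • τ.np j := by
  induction j, hij using Nat.le_induction with
  | base => simp
  | succ j hij ih =>
    obtain ⟨hp, hq⟩ := ih fun h' h1 h2 => h h' h1 (by omega)
    have hj := τ.no_reflection j (h j hij (by omega))
    refine ⟨hj.trans hp, ?_⟩
    rw [τ.motion, hq, τ.np_congr hj, time_succ, add_assoc, ← add_smul]
    congr 2
    ring

theorem exists_bounce (τ : MarkedTraj n H T) : ∃ i, τ.bounce i := by
  by_contra! hcon
  obtain ⟨-, hq⟩ := τ.eq_of_no_bounce (Nat.zero_le τ.m) fun h _ _ => hcon h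
  have h0 : τ.time 0 < τ.time τ.m := τ.time_strictMono τ.m_pos
  have hper := τ.q_periodic 0
  rw [zero_add] at hper
  rw [hper, left_eq_add] at hq
  have := congrArg (· ⬝ᵥ τ.p τ.m) hq
  simp only [smul_dotProduct, (τ.np_spec _).2.1, zero_dotProduct, smul_eq_mul, mul_one] at this
  linarith

theorem bounce_add_mul (τ : MarkedTraj n H T) (i j : ℕ) :
    τ.bounce (i + j * τ.m) ↔ τ.bounce i := by
  induction j with
  | zero => simp
  | succ j ih => rw [add_mul, one_mul, ← add_assoc, τ.bounce_periodic, ih]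

theorem infinite_bounce (τ : MarkedTraj n H T) : (Set.ofPred τ.bounce).Infinite := by
  obtain ⟨i, hi⟩ := τ.exists_bounce
  refine Set.infinite_of_forall_exists_gt fun N => ⟨i + (N + 1) * τ.m, ?_, ?_⟩
  · exact (τ.bounce_add_mul i _).2 hi
  · nlinarith [τ.m_pos]

open Classical in
theorem count_add_period (τ : MarkedTraj n H T) (i : ℕ) :
    Nat.count τ.bounce (i + τ.m) = Nat.count τ.bounce i + Nat.count τ.bounce τ.m := by
  rw [Nat.count_add']
  simp only [τ.bounce_periodic]

open Classical in
theorem nth_add_count_period (τ : MarkedTraj n H T) (j : ℕ) :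
    Nat.nth τ.bounce (j + Nat.count τ.bounce τ.m) = Nat.nth τ.bounce j + τ.m := by
  have hb := Nat.nth_mem_of_infinite τ.infinite_bounce j
  rw [← Nat.nth_count ((τ.bounce_periodic _).2 hb), count_add_period,
    Nat.count_nth_of_infinite τ.infinite_bounce]

open Classical in
theorem count_period_pos (τ : MarkedTraj n H T) : 0 < Nat.count τ.bounce τ.m := by
  by_contra! h
  have := τ.nth_add_count_period 0
  rw [Nat.le_zero.1 h, add_zero] at this
  have := τ.m_pos
  omega

theorem not_bounce_between (τ : MarkedTraj n H T) (j h : ℕ)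
    (h1 : Nat.nth τ.bounce j + 1 ≤ h) (h2 : h < Nat.nth τ.bounce (j + 1)) : ¬ τ.bounce h :=
  fun hb => by
    have := Nat.le_nth_of_lt_nth_succ h2 hb
    omega

theorem nth_add_one_le (τ : MarkedTraj n H T) (j : ℕ) :
    Nat.nth τ.bounce j + 1 ≤ Nat.nth τ.bounce (j + 1) :=
  Nat.nth_strictMono τ.infinite_bounce (Nat.lt_succ_self j)

open Classical in
/-- The trajectory obtained by keeping only the reflection points. -/
noncomputable def compress (τ : MarkedTraj n H T) : MarkedTraj n H T where
  m := Nat.count τ.bounce τ.m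
  m_pos := τ.count_period_pos
  bounce _ := True
  q j := τ.q (Nat.nth τ.bounce j)
  p j := τ.p (Nat.nth τ.bounce j)
  nq j := τ.nq (Nat.nth τ.bounce j)
  np j := τ.np (Nat.nth τ.bounce j)
  lam j := τ.lam (Nat.nth τ.bounce j)
  mu j := τ.time (Nat.nth τ.bounce (j + 1)) - τ.time (Nat.nth τ.bounce j)
  q_mem _ := τ.q_mem _
  p_mem _ := τ.p_mem _
  q_periodic j := by rw [nth_add_count_period, τ.q_periodic]
  p_periodic j := by rw [nth_add_count_period, τ.p_periodic]
  bounce_periodic _ := Iff.rfl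
  nq_spec j _ := τ.nq_spec _ (Nat.nth_mem_of_infinite τ.infinite_bounce j)
  np_spec j := τ.np_spec _
  lam_pos j _ := τ.lam_pos _ (Nat.nth_mem_of_infinite τ.infinite_bounce j)
  mu_pos j := sub_pos.2 (τ.time_strictMono (τ.nth_add_one_le j))
  reflection j _ := by
    rw [(τ.eq_of_no_bounce (τ.nth_add_one_le j) (τ.not_bounce_between j)).1,
      τ.reflection _ (Nat.nth_mem_of_infinite τ.infinite_bounce j)]
  no_reflection j hj := absurd trivial hj
  motion j := by
    obtain ⟨hp, hq⟩ := τ.eq_of_no_bounce (τ.nth_add_one_le j) (τ.not_bounce_between j)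
    rw [hq, τ.motion, ← τ.np_congr hp, add_assoc, ← add_smul, time_succ]
    congr 2
    ring

theorem compress_time (τ : MarkedTraj n H T) (j : ℕ) :
    τ.compress.time j = τ.time (Nat.nth τ.bounce j) - τ.time (Nat.nth τ.bounce 0) :=
  Finset.sum_range_sub (fun j => τ.time (Nat.nth τ.bounce j)) j

end MarkedTraj

/-- Every trajectory in `H × T` all of whose indices are reflection points is centrally
symmetric with half-period `n` and half-time `2`, and its periods take times in `4ℕ`. -/
def CentrallySymmetricDynamics (n : ℕ) (H T : Set (Fin n → ℝ)) : Prop :=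
  ∀ τ : MarkedTraj n H T, (∀ i, τ.bounce i) →
    (∀ i, τ.q (i + n) = -τ.q i ∧ τ.p (i + n) = -τ.p i ∧ τ.time (i + n) = τ.time i + 2) ∧
      ∃ c : ℕ, τ.time τ.m = 4 * c

namespace MarkedTraj

variable {n : ℕ} {H T : Set (Fin n → ℝ)}

theorem time_nth_add (hC : CentrallySymmetricDynamics n H T) (τ : MarkedTraj n H T) (j : ℕ) :
    τ.time (Nat.nth τ.bounce (j + n)) = τ.time (Nat.nth τ.bounce j) + 2 := by
  have := ((hC τ.compress fun _ => trivial).1 j).2.2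
  rw [compress_time, compress_time] at this
  linarith

theorem exists_time_period (hC : CentrallySymmetricDynamics n H T) (τ : MarkedTraj n H T) :
    ∃ c : ℕ, τ.time τ.m = 4 * c := by
  classical
  obtain ⟨c, hc⟩ := (hC τ.compress fun _ => trivial).2
  refine ⟨c, ?_⟩
  have h := τ.nth_add_count_period 0
  rw [zero_add] at h
  have hm : τ.compress.m = Nat.count τ.bounce τ.m := rfl
  rw [compress_time, hm, h, time_add_period] at hc
  linarith

open Classical in
theorem not_bounce_before_next (τ : MarkedTraj n H T) (i h : ℕ) (h1 : i ≤ h)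
    (h2 : h < Nat.nth τ.bounce (Nat.count τ.bounce i)) : ¬ τ.bounce h := fun hb => by
  rw [← Nat.nth_count hb, Nat.nth_lt_nth τ.infinite_bounce] at h2
  exact absurd (Nat.count_monotone τ.bounce h1) (by omega)

open Classical in
theorem eq_neg_of_count (hH : PolarPair n H T) (hC : CentrallySymmetricDynamics n H T)
    (τ : MarkedTraj n H T) {i j : ℕ} (hcount : Nat.count τ.bounce j = Nat.count τ.bounce i + n)
    (htime : τ.time j = τ.time i + 2) : τ.q j = -τ.q i ∧ τ.p j = -τ.p i := by
  obtain ⟨hpi, hqi⟩ := τ.eq_of_no_bounce (Nat.le_nth_count τ.infinite_bounce i)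
    (τ.not_bounce_before_next i)
  obtain ⟨hpj, hqj⟩ := τ.eq_of_no_bounce (Nat.le_nth_count τ.infinite_bounce j)
    (τ.not_bounce_before_next j)
  rw [hcount] at hpj hqj
  set c := Nat.count τ.bounce i
  have hsym := (hC τ.compress fun _ => trivial).1 c
  have hq : τ.q (Nat.nth τ.bounce (c + n)) = -τ.q (Nat.nth τ.bounce c) := hsym.1
  have hp : τ.p (Nat.nth τ.bounce (c + n)) = -τ.p (Nat.nth τ.bounce c) := hsym.2.1
  have ht := time_nth_add hC τ c
  have hnp : τ.np (Nat.nth τ.bounce (c + n)) = -τ.np (Nat.nth τ.bounce c) :=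
    (τ.np_spec _).unique (hp ▸ (τ.np_spec _).neg hH.neg_left)
  refine ⟨?_, by rw [← hpj, hp, hpi]⟩
  have hd : τ.time (Nat.nth τ.bounce (c + n)) - τ.time j
      = τ.time (Nat.nth τ.bounce c) - τ.time i := by linarith
  rw [hq, hqi, hnp, hd, smul_neg, neg_add] at hqj
  exact (add_right_cancel hqj).symm

end MarkedTraj

open Classical in
/-- Two complementary sets of indices, each with a time shift `2` after a fixed number of
its members, have a common time shift `2`. -/
theorem interleave {t : ℕ → ℝ} (ht : StrictMono t) {A B : ℕ → Prop} (hAB : ∀ i, B i ↔ ¬ A i)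
    (hA : (Set.ofPred A).Infinite) (hB : (Set.ofPred B).Infinite) {k l : ℕ}
    (htA : ∀ j, t (Nat.nth A (j + k)) = t (Nat.nth A j) + 2)
    (htB : ∀ j, t (Nat.nth B (j + l)) = t (Nat.nth B j) + 2) {i : ℕ} (hi : A i)
    (hpos : 0 < Nat.count B i) :
    t (i + (k + l)) = t i + 2 ∧ Nat.count A (i + (k + l)) = Nat.count A i + k ∧
      Nat.count B (i + (k + l)) = Nat.count B i + l := by
  have hsum : ∀ i, Nat.count A i + Nat.count B i = i := by
    intro i
    induction i with
    | zero => simp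
    | succ i ih =>
      rw [Nat.count_succ, Nat.count_succ]
      by_cases h : A i <;> simp [hAB, h] <;> omega
  set c := Nat.count A i with hc
  set d := Nat.count B i with hd
  have htc := htA c
  rw [hc, Nat.nth_count hi, ← hc] at htc
  set j := Nat.nth A (c + k) with hj
  have hcj : Nat.count A j = c + k := Nat.count_nth_of_infinite hA _
  have hup : Nat.count B j ≤ d + l := by
    rw [Nat.count_le_iff_le_nth hB, ← ht.le_iff_le, htB, htc]
    gcongr
    exact ht.monotone (Nat.le_nth_count hB i)
  have hlow : d - 1 + l < Nat.count B j := by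
    rw [Nat.lt_nth_iff_count_lt hB, ← ht.lt_iff_lt, htB, htc]
    gcongr
    exact ht (Nat.nth_lt_of_lt_count (by omega))
  have hij : j = i + (k + l) := by
    have := hsum i
    have := hsum j
    omega
  have := hsum i
  have := hsum j
  rw [← hij]
  exact ⟨htc, hcj, by omega⟩

/-- An orthogonal decomposition of `ℝᴺ` into `ℝᵏ` and `ℝˡ`. -/
structure Splitting (N k l : ℕ) where
  fst : (Fin N → ℝ) →ₗ[ℝ] (Fin k → ℝ)
  snd : (Fin N → ℝ) →ₗ[ℝ] (Fin l → ℝ)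
  join : (Fin k → ℝ) → (Fin l → ℝ) → (Fin N → ℝ)
  fst_join : ∀ a b, fst (join a b) = a
  snd_join : ∀ a b, snd (join a b) = b
  dot : ∀ x y, x ⬝ᵥ y = fst x ⬝ᵥ fst y + snd x ⬝ᵥ snd y
  ext : ∀ x y, fst x = fst y → snd x = snd y → x = y

namespace Splitting

variable {N k l : ℕ} {K M : Set (Fin k → ℝ)} {L R : Set (Fin l → ℝ)} {H T : Set (Fin N → ℝ)}

/-- The decomposition with the two summands exchanged. -/
def swap (σ : Splitting N k l) : Splitting N l k where
  fst := σ.snd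
  snd := σ.fst
  join a b := σ.join b a
  fst_join _ _ := σ.snd_join _ _
  snd_join _ _ := σ.fst_join _ _
  dot x y := by rw [σ.dot, add_comm]
  ext x y h1 h2 := σ.ext x y h2 h1

theorem dot_join (σ : Splitting N k l) (x : Fin N → ℝ) (a : Fin k → ℝ) (b : Fin l → ℝ) :
    x ⬝ᵥ σ.join a b = σ.fst x ⬝ᵥ a + σ.snd x ⬝ᵥ b := by
  rw [σ.dot, σ.fst_join, σ.snd_join]

theorem join_dot (σ : Splitting N k l) (x : Fin N → ℝ) (a : Fin k → ℝ) (b : Fin l → ℝ) :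
    σ.join a b ⬝ᵥ x = a ⬝ᵥ σ.fst x + b ⬝ᵥ σ.snd x := by
  rw [σ.dot, σ.fst_join, σ.snd_join]

/-- `H` is the product of `K` and `L`, and `T` is the polar of `H`, where `(K, M)` and `(L, R)`
are polar pairs. -/
structure IsProd (σ : Splitting N k l) (K M : Set (Fin k → ℝ)) (L R : Set (Fin l → ℝ))
    (H T : Set (Fin N → ℝ)) : Prop where
  left : PolarPair k K M
  right : PolarPair l L R
  mem : ∀ x, x ∈ H ↔ σ.fst x ∈ K ∧ σ.snd x ∈ L
  polar : ∀ p, p ∈ T ↔ ∀ q ∈ H, p ⬝ᵥ q ≤ 1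

namespace IsProd

variable {σ : Splitting N k l}

theorem swap (h : σ.IsProd K M L R H T) : σ.swap.IsProd L R K M H T where
  left := h.right
  right := h.left
  mem x := (h.mem x).trans and_comm
  polar := h.polar

theorem le_one (h : σ.IsProd K M L R H T) {p : Fin N → ℝ} (hp : p ∈ T) {a : Fin k → ℝ}
    (ha : a ∈ K) {b : Fin l → ℝ} (hb : b ∈ L) : σ.fst p ⬝ᵥ a + σ.snd p ⬝ᵥ b ≤ 1 := by
  rw [← σ.dot_join]
  exact (h.polar p).1 hp _ ((h.mem _).2 (by rw [σ.fst_join, σ.snd_join]; exact ⟨ha, hb⟩))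

theorem join_zero_mem (h : σ.IsProd K M L R H T) {x : Fin k → ℝ} (hx : x ∈ M) :
    σ.join x 0 ∈ T := by
  refine (h.polar _).2 fun q hq => ?_
  rw [σ.join_dot, zero_dotProduct, add_zero]
  exact (h.left.mem_right x).1 hx _ ((h.mem q).1 hq).1

theorem normal_of_pos (h : σ.IsProd K M L R H T) {q u : Fin N → ℝ} (hq : q ∈ H)
    (hu : IsNormal T q u) (hpos : 0 < σ.fst u ⬝ᵥ σ.fst q) :
    σ.snd u = 0 ∧ IsNormal M (σ.fst q) (σ.fst u) := by
  obtain ⟨huT, huq, huniq⟩ := hu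
  obtain ⟨hqK, hqL⟩ := (h.mem q).1 hq
  set α := σ.fst u ⬝ᵥ σ.fst q with hα
  rw [σ.dot] at huq
  have key : ∀ v ∈ M, v ⬝ᵥ σ.fst q = 1 → σ.join v 0 = u := fun v hv hvq =>
    huniq _ (h.join_zero_mem hv) (by rw [σ.join_dot, zero_dotProduct, add_zero, hvq])
  have hmem : α⁻¹ • σ.fst u ∈ M := by
    refine (h.left.mem_right _).2 fun a ha => ?_
    rw [smul_dotProduct, smul_eq_mul, inv_mul_le_iff₀ hpos, mul_one]
    linarith [h.le_one huT ha hqL]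
  have hu' := key _ hmem (by rw [smul_dotProduct, smul_eq_mul, ← hα, inv_mul_cancel₀ hpos.ne'])
  have hsnd : σ.snd u = 0 := by rw [← hu', σ.snd_join]
  have hfst : α⁻¹ • σ.fst u = σ.fst u := by
    conv_rhs => rw [← hu', σ.fst_join]
  rw [hsnd, zero_dotProduct, add_zero] at huq
  refine ⟨hsnd, hfst ▸ hmem, huq, fun v hv hvq => ?_⟩
  rw [← key v hv hvq, σ.fst_join]

/-- The facets of a product are products of a facet of one factor with the other factor. -/
theorem normal_cases (h : σ.IsProd K M L R H T) {q u : Fin N → ℝ} (hq : q ∈ H)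
    (hu : IsNormal T q u) :
    (σ.snd u = 0 ∧ IsNormal M (σ.fst q) (σ.fst u)) ∨
      (σ.fst u = 0 ∧ IsNormal R (σ.snd q) (σ.snd u)) := by
  by_cases hpos : 0 < σ.fst u ⬝ᵥ σ.fst q
  · exact Or.inl (h.normal_of_pos hq hu hpos)
  · refine Or.inr (h.swap.normal_of_pos hq hu ?_)
    have := hu.2.1
    rw [σ.dot] at this
    change 0 < σ.snd u ⬝ᵥ σ.snd q
    linarith

theorem snd_eq_zero_iff (h : σ.IsProd K M L R H T) {q u : Fin N → ℝ} (hq : q ∈ H)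
    (hu : IsNormal T q u) : σ.snd u = 0 ↔ σ.fst u ≠ 0 := by
  have key : u ≠ 0 := by
    rintro rfl
    simpa using hu.2.1
  constructor
  · intro h1 h2
    exact key (σ.ext _ _ (by simpa using h2) (by simpa using h1))
  · intro h1
    rcases h.normal_cases hq hu with h2 | h2
    exacts [h2.1, absurd h2.1 h1]

theorem normal_of_fst_ne (h : σ.IsProd K M L R H T) {q u : Fin N → ℝ} (hq : q ∈ H)
    (hu : IsNormal T q u) (hne : σ.fst u ≠ 0) : IsNormal M (σ.fst q) (σ.fst u) := by
  rcases h.normal_cases hq hu with h2 | h2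
  exacts [h2.2, absurd h2.1 hne]

theorem fst_dot_le (h : σ.IsProd K M L R H T) {p w : Fin N → ℝ} (hp : p ∈ T)
    (hw : IsNormal H p w) {a : Fin k → ℝ} (ha : a ∈ K) :
    σ.fst p ⬝ᵥ a ≤ σ.fst p ⬝ᵥ σ.fst w := by
  have h1 := h.le_one hp ha ((h.mem w).1 hw.1).2
  have h2 := hw.2.1
  rw [dotProduct_comm, σ.dot] at h2
  linarith

theorem eq_fst_of_dot_eq (h : σ.IsProd K M L R H T) {p w : Fin N → ℝ}
    (hw : IsNormal H p w) {a : Fin k → ℝ} (ha : a ∈ K)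
    (heq : σ.fst p ⬝ᵥ a = σ.fst p ⬝ᵥ σ.fst w) : a = σ.fst w := by
  have h2 := hw.2.1
  rw [dotProduct_comm, σ.dot, ← heq, ← σ.dot_join] at h2
  have := hw.2.2 (σ.join a (σ.snd w))
    ((h.mem _).2 (by rw [σ.fst_join, σ.snd_join]; exact ⟨ha, ((h.mem w).1 hw.1).2⟩))
    (by rw [dotProduct_comm, h2])
  rw [← this, σ.fst_join]

theorem fst_dot_pos (h : σ.IsProd K M L R H T) {p w : Fin N → ℝ} (hp : p ∈ T)
    (hw : IsNormal H p w) : 0 < σ.fst p ⬝ᵥ σ.fst w := by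
  by_contra! hle
  have hzero : ∀ a ∈ K, σ.fst p ⬝ᵥ a = σ.fst p ⬝ᵥ σ.fst w := by
    intro a ha
    have h0 := h.fst_dot_le hp hw h.left.zero_left
    have h1 := h.fst_dot_le hp hw ha
    have h2 := h.fst_dot_le hp hw (h.left.neg_left a ha)
    rw [dotProduct_zero] at h0
    rw [dotProduct_neg] at h2
    linarith
  have heq : ∀ a ∈ K, a = σ.fst w := fun a ha => h.eq_fst_of_dot_eq hw ha (hzero a ha)
  have h1 := (heq _ (h.left.single_left ⟨0, h.left.pos⟩)).trans (heq 0 h.left.zero_left).symm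
  simpa using congrFun h1 ⟨0, h.left.pos⟩

theorem scaled_mem (h : σ.IsProd K M L R H T) {p w : Fin N → ℝ} (hp : p ∈ T)
    (hw : IsNormal H p w) : (σ.fst p ⬝ᵥ σ.fst w)⁻¹ • σ.fst p ∈ M := by
  refine (h.left.mem_right _).2 fun a ha => ?_
  rw [smul_dotProduct, smul_eq_mul, inv_mul_le_iff₀ (h.fst_dot_pos hp hw), mul_one]
  exact h.fst_dot_le hp hw ha

theorem scaled_normal (h : σ.IsProd K M L R H T) {p w : Fin N → ℝ} (hp : p ∈ T)
    (hw : IsNormal H p w) :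
    IsNormal K ((σ.fst p ⬝ᵥ σ.fst w)⁻¹ • σ.fst p) (σ.fst w) := by
  have hpos := h.fst_dot_pos hp hw
  refine ⟨((h.mem w).1 hw.1).1, ?_, fun v hv hv1 => h.eq_fst_of_dot_eq hw hv ?_⟩
  · rw [dotProduct_smul, smul_eq_mul, dotProduct_comm (σ.fst w), inv_mul_cancel₀ hpos.ne']
  · rw [dotProduct_smul, smul_eq_mul, inv_mul_eq_iff_eq_mul₀ hpos.ne', mul_one] at hv1
    rw [dotProduct_comm, hv1]

theorem fst_dot_congr (h : σ.IsProd K M L R H T) {p w p' w' : Fin N → ℝ} (hp : p ∈ T)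
    (hw : IsNormal H p w) (hp' : p' ∈ T) (hw' : IsNormal H p' w') (heq : σ.fst p' = σ.fst p) :
    σ.fst p' ⬝ᵥ σ.fst w' = σ.fst p ⬝ᵥ σ.fst w := by
  have h1 := h.fst_dot_le hp hw ((h.mem w').1 hw'.1).1
  have h2 := h.fst_dot_le hp' hw' ((h.mem w).1 hw.1).1
  rw [heq] at h2 ⊢
  exact le_antisymm h1 h2

theorem fst_dot_const (h : σ.IsProd K M L R H T) (τ : MarkedTraj N H T) (i : ℕ) :
    σ.fst (τ.p i) ⬝ᵥ σ.fst (τ.np i) = σ.fst (τ.p 0) ⬝ᵥ σ.fst (τ.np 0) := by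
  induction i with
  | zero => rfl
  | succ i ih =>
    rw [← ih]
    have hi := (τ.np_spec i).2.1
    have hi' := (τ.np_spec (i + 1)).2.1
    rw [dotProduct_comm, σ.dot] at hi hi'
    have hfst := h.fst_dot_congr (τ.p_mem i) (τ.np_spec i) (τ.p_mem (i + 1)) (τ.np_spec (i + 1))
    by_cases hb : τ.bounce i
    · have hp := τ.reflection i hb
      rcases h.normal_cases (τ.q_mem i) (τ.nq_spec i hb) with ⟨h0, -⟩ | ⟨h0, -⟩
      · have hsnd := h.swap.fst_dot_congr (τ.p_mem i) (τ.np_spec i) (τ.p_mem (i + 1))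
          (τ.np_spec (i + 1)) (by
            change σ.snd _ = σ.snd _
            rw [hp, map_sub, map_smul, h0, smul_zero, sub_zero])
        change σ.snd _ ⬝ᵥ σ.snd _ = σ.snd _ ⬝ᵥ σ.snd _ at hsnd
        linarith
      · exact hfst (by rw [hp, map_sub, map_smul, h0, smul_zero, sub_zero])
    · exact hfst (by rw [τ.no_reflection i hb])

/-- The first component of a trajectory in a product, with its momentum rescaled. -/
noncomputable def component (h : σ.IsProd K M L R H T) (τ : MarkedTraj N H T)
    (hτ : ∀ i, τ.bounce i) : MarkedTraj k K M where
  m := τ.m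
  m_pos := τ.m_pos
  bounce i := σ.fst (τ.nq i) ≠ 0
  q i := σ.fst (τ.q i)
  p i := (σ.fst (τ.p 0) ⬝ᵥ σ.fst (τ.np 0))⁻¹ • σ.fst (τ.p i)
  nq i := σ.fst (τ.nq i)
  np i := σ.fst (τ.np i)
  lam i := (σ.fst (τ.p 0) ⬝ᵥ σ.fst (τ.np 0))⁻¹ * τ.lam i
  mu := τ.mu
  q_mem i := ((h.mem _).1 (τ.q_mem i)).1
  p_mem i := by
    rw [← h.fst_dot_const τ i]
    exact h.scaled_mem (τ.p_mem i) (τ.np_spec i)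
  q_periodic i := by rw [τ.q_periodic]
  p_periodic i := by rw [τ.p_periodic]
  bounce_periodic i := by
    have := τ.nq_spec (i + τ.m) (hτ _)
    rw [τ.q_periodic] at this
    rw [this.unique (τ.nq_spec i (hτ i))]
  nq_spec i hi := h.normal_of_fst_ne (τ.q_mem i) (τ.nq_spec i (hτ i)) hi
  np_spec i := by
    rw [← h.fst_dot_const τ i]
    exact h.scaled_normal (τ.p_mem i) (τ.np_spec i)
  lam_pos i _ := mul_pos (inv_pos.2 (h.fst_dot_pos (τ.p_mem 0) (τ.np_spec 0)))
    (τ.lam_pos i (hτ i))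
  mu_pos := τ.mu_pos
  reflection i _ := by
    rw [τ.reflection i (hτ i), map_sub, map_smul, smul_sub, smul_smul]
  no_reflection i hi := by
    rw [τ.reflection i (hτ i), map_sub, map_smul, not_not.1 hi, smul_zero, sub_zero]
  motion i := by rw [τ.motion i, map_add, map_smul]

open Classical in
theorem fst_eq_neg (h : σ.IsProd K M L R H T) (hC : CentrallySymmetricDynamics k K M)
    (τ : MarkedTraj N H T) (hτ : ∀ i, τ.bounce i) {i j : ℕ}
    (hcount : Nat.count (h.component τ hτ).bounce j = Nat.count (h.component τ hτ).bounce i + k)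
    (htime : τ.time j = τ.time i + 2) :
    σ.fst (τ.q j) = -σ.fst (τ.q i) ∧ σ.fst (τ.p j) = -σ.fst (τ.p i) := by
  obtain ⟨hq, hp⟩ := MarkedTraj.eq_neg_of_count h.left hC (h.component τ hτ) hcount htime
  refine ⟨hq, ?_⟩
  have hr := inv_ne_zero (h.fst_dot_pos (τ.p_mem 0) (τ.np_spec 0)).ne'
  refine smul_right_injective _ hr ?_
  change _ • _ = _ • _
  rw [smul_neg]
  exact hp

theorem dynamics (h : σ.IsProd K M L R H T) (hN : N = k + l)
    (hK : CentrallySymmetricDynamics k K M) (hL : CentrallySymmetricDynamics l L R) :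
    CentrallySymmetricDynamics N H T := by
  classical
  intro τ hτ
  set τ₁ := h.component τ hτ
  set τ₂ := h.swap.component τ hτ
  have h21 : ∀ i, τ₂.bounce i ↔ ¬ τ₁.bounce i := fun i =>
    not_congr (h.snd_eq_zero_iff (τ.q_mem i) (τ.nq_spec i (hτ i)))
  have h12 : ∀ i, τ₁.bounce i ↔ ¬ τ₂.bounce i := fun i => by rw [h21, not_not]
  have pos₁ : ∀ i, 0 < Nat.count τ₁.bounce (i + τ.m) := fun i =>
    τ₁.count_period_pos.trans_le (Nat.count_monotone _ (Nat.le_add_left τ.m i))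
  have pos₂ : ∀ i, 0 < Nat.count τ₂.bounce (i + τ.m) := fun i =>
    τ₂.count_period_pos.trans_le (Nat.count_monotone _ (Nat.le_add_left τ.m i))
  have key : ∀ i, τ.time (i + τ.m + N) = τ.time (i + τ.m) + 2 ∧
      Nat.count τ₁.bounce (i + τ.m + N) = Nat.count τ₁.bounce (i + τ.m) + k ∧
      Nat.count τ₂.bounce (i + τ.m + N) = Nat.count τ₂.bounce (i + τ.m) + l := by
    intro i
    by_cases hi : τ₁.bounce (i + τ.m)
    · rw [show i + τ.m + N = i + τ.m + (k + l) by omega]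
      exact interleave τ.time_strictMono h21 τ₁.infinite_bounce τ₂.infinite_bounce
        (MarkedTraj.time_nth_add hK τ₁) (MarkedTraj.time_nth_add hL τ₂) hi (pos₂ i)
    · rw [show i + τ.m + N = i + τ.m + (l + k) by omega]
      obtain ⟨ht, h2, h1⟩ := interleave τ.time_strictMono h12 τ₂.infinite_bounce
        τ₁.infinite_bounce (MarkedTraj.time_nth_add hL τ₂) (MarkedTraj.time_nth_add hK τ₁)
        ((h21 _).2 hi) (pos₁ i)
      exact ⟨ht, h1, h2⟩
  refine ⟨fun i => ?_, MarkedTraj.exists_time_period hK τ₁⟩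
  obtain ⟨ht, h1, h2⟩ := key i
  obtain ⟨hq1, hp1⟩ := h.fst_eq_neg hK τ hτ h1 ht
  obtain ⟨hq2, hp2⟩ := h.swap.fst_eq_neg hL τ hτ h2 ht
  rw [add_right_comm] at ht hq1 hp1 hq2 hp2
  rw [τ.q_periodic, τ.q_periodic] at hq1 hq2
  rw [τ.p_periodic, τ.p_periodic] at hp1 hp2
  rw [τ.time_add_period, τ.time_add_period] at ht
  exact ⟨σ.ext _ _ (by rw [map_neg, hq1]) (by rw [map_neg]; exact hq2),
    σ.ext _ _ (by rw [map_neg, hp1]) (by rw [map_neg]; exact hp2), by linarith⟩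

end IsProd

end Splitting

namespace MarkedTraj

variable {n : ℕ} {H T : Set (Fin n → ℝ)}

/-- The trajectory in `T × H` in which momenta and (negated) coordinates exchange roles. -/
def dual (hH : PolarPair n H T) (τ : MarkedTraj n H T) (hτ : ∀ i, τ.bounce i) :
    MarkedTraj n T H where
  m := τ.m
  m_pos := τ.m_pos
  bounce _ := True
  q i := τ.p (i + 1)
  p i := -τ.q i
  nq i := τ.np (i + 1)
  np i := -τ.nq i
  lam := τ.mu
  mu i := τ.lam (i + 1)
  q_mem _ := τ.p_mem _
  p_mem i := hH.neg_left _ (τ.q_mem i)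
  q_periodic i := by rw [add_right_comm, τ.p_periodic]
  p_periodic i := by rw [τ.q_periodic]
  bounce_periodic _ := Iff.rfl
  nq_spec i _ := τ.np_spec _
  np_spec i := (τ.nq_spec i (hτ i)).neg hH.neg_right
  lam_pos i _ := τ.mu_pos i
  mu_pos i := τ.lam_pos _ (hτ _)
  reflection i _ := by rw [τ.motion, neg_add, sub_eq_add_neg]
  no_reflection _ h := absurd trivial h
  motion i := by rw [τ.reflection _ (hτ _), smul_neg, sub_eq_add_neg]

/-- The coordinate time and the momentum time differ by the pairing of the two positions. -/
theorem dual_time (hH : PolarPair n H T) (τ : MarkedTraj n H T) (hτ : ∀ i, τ.bounce i) (i : ℕ) :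
    (τ.dual hH hτ).time i - τ.time (i + 1) + τ.p (i + 1) ⬝ᵥ τ.q (i + 1)
      = -τ.time 1 + τ.p 1 ⬝ᵥ τ.q 1 := by
  induction i with
  | zero => simp [time_zero]
  | succ i ih =>
    rw [← ih, time_succ, τ.time_succ (i + 1), τ.motion (i + 1), dotProduct_add, dotProduct_smul,
      dotProduct_comm _ (τ.np _), (τ.np_spec _).2.1, τ.reflection (i + 1) (hτ _),
      sub_dotProduct, smul_dotProduct, (τ.nq_spec _ (hτ _)).2.1]
    change _ + τ.lam (i + 1) - _ + _ = _
    simp only [smul_eq_mul]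
    ring

end MarkedTraj

theorem CentrallySymmetricDynamics.symm {n : ℕ} {H T : Set (Fin n → ℝ)} (hH : PolarPair n H T)
    (hC : CentrallySymmetricDynamics n T H) : CentrallySymmetricDynamics n H T := by
  intro τ hτ
  obtain ⟨h1, c, hc⟩ := hC (τ.dual hH hτ) fun _ => trivial
  have hq : ∀ i, τ.q (i + n) = -τ.q i := fun i => neg_injective (h1 i).2.1
  have hp : ∀ i, τ.p (i + n + 1) = -τ.p (i + 1) := fun i => (h1 i).1
  have hp' : ∀ i, τ.p (i + n) = -τ.p i := by
    intro i
    obtain ⟨m, hm⟩ := Nat.exists_eq_add_one.2 τ.m_pos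
    have := hp (i + m)
    rwa [show i + m + n + 1 = i + n + τ.m by omega, show i + m + 1 = i + τ.m by omega,
      τ.p_periodic, τ.p_periodic] at this
  have ht : ∀ i, τ.time (i + 1 + n) = τ.time (i + 1) + 2 := by
    intro i
    have h2 := τ.dual_time hH hτ i
    have h3 := τ.dual_time hH hτ (i + n)
    rw [(h1 i).2.2, add_right_comm i n 1, hq, hp', neg_dotProduct_neg] at h3
    linarith
  refine ⟨fun i => ⟨hq i, hp' i, ?_⟩, c, ?_⟩
  · obtain ⟨m, hm⟩ := Nat.exists_eq_add_one.2 τ.m_pos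
    have := ht (i + m)
    rw [show i + m + 1 + n = i + n + τ.m by omega, show i + m + 1 = i + τ.m by omega,
      τ.time_add_period, τ.time_add_period] at this
    linarith
  · have h2 := τ.dual_time hH hτ τ.m
    rw [add_comm τ.m 1, τ.time_add_period, τ.p_periodic, τ.q_periodic] at h2
    have hm : (τ.dual hH hτ).m = τ.m := rfl
    rw [hm] at hc
    linarith

theorem mem_polarSet_segment (p : Fin 1 → ℝ) :
    p ∈ polarSet {x : Fin 1 → ℝ | |x 0| ≤ 1} ↔ |p 0| ≤ 1 := by
  simp only [polarSet, pairing, Set.mem_ofPred_eq, Fin.sum_univ_one, Fin.isValue]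
  constructor
  · intro h
    have h1 := h (fun _ => 1) (by simp)
    have h2 := h (fun _ => -1) (by simp)
    exact abs_le.2 ⟨by linarith, by linarith⟩
  · intro h q hq
    refine (le_abs_self _).trans ?_
    rw [abs_mul]
    exact mul_le_one₀ h (abs_nonneg _) hq

theorem polarPair_segment :
    PolarPair 1 {x : Fin 1 → ℝ | |x 0| ≤ 1} (polarSet {x : Fin 1 → ℝ | |x 0| ≤ 1}) where
  pos := one_pos
  mem_right p := Iff.rfl
  mem_left q := by
    refine (mem_polarSet_segment q).symm.trans ?_
    refine forall_congr' fun p => imp_congr (mem_polarSet_segment p).symm ?_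
    rw [dotProduct_comm]
    rfl
  neg_left q hq := by simpa using hq
  single_left i := by simp [Fin.fin_one_eq_zero i]
  single_right i := by simp [mem_polarSet_segment, Fin.fin_one_eq_zero i]

theorem eq_one_or_eq_neg_one_of_mul_eq_one {a b : ℝ} (ha : |a| ≤ 1) (hb : |b| ≤ 1)
    (h : a * b = 1) : a = b ∧ (b = 1 ∨ b = -1) := by
  rw [abs_le] at ha hb
  have hab : a = b := by nlinarith [sq_nonneg (a - b)]
  subst hab
  exact ⟨rfl, mul_self_eq_one_iff.1 h⟩

theorem dynamics_segment :
    CentrallySymmetricDynamics 1 {x : Fin 1 → ℝ | |x 0| ≤ 1}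
      (polarSet {x : Fin 1 → ℝ | |x 0| ≤ 1}) := by
  intro τ hτ
  have hq : ∀ i, τ.nq i 0 = τ.q i 0 ∧ (τ.q i 0 = 1 ∨ τ.q i 0 = -1) := fun i => by
    have h := τ.nq_spec i (hτ i)
    refine eq_one_or_eq_neg_one_of_mul_eq_one ((mem_polarSet_segment _).1 h.1) (τ.q_mem i) ?_
    simpa [dotProduct] using h.2.1
  have hp : ∀ i, τ.np i 0 = τ.p i 0 ∧ (τ.p i 0 = 1 ∨ τ.p i 0 = -1) := fun i => by
    have h := τ.np_spec i
    refine eq_one_or_eq_neg_one_of_mul_eq_one h.1 ((mem_polarSet_segment _).1 (τ.p_mem i)) ?_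
    simpa [dotProduct] using h.2.1
  have hstep : ∀ i, τ.q (i + 1) 0 = -τ.q i 0 ∧ τ.p (i + 1) 0 = -τ.p i 0 ∧ τ.mu i = 2 := by
    intro i
    have h1 := congrFun (τ.reflection i (hτ i)) 0
    have h2 := congrFun (τ.motion i) 0
    simp only [Pi.sub_apply, Pi.add_apply, Pi.smul_apply, smul_eq_mul, (hq i).1,
      (hp (i + 1)).1] at h1 h2
    have h3 := τ.lam_pos i (hτ i)
    have h4 := τ.mu_pos i
    rcases (hq i).2 with a | a <;> rcases (hq (i + 1)).2 with b | b <;>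
      rcases (hp i).2 with c | c <;> rcases (hp (i + 1)).2 with d | d <;>
      rw [a, c, d] at h1 <;> rw [a, b, d] at h2 <;> rw [a, b, c, d] <;>
      first
        | (exfalso; linarith)
        | exact ⟨by linarith, by linarith, by linarith⟩
  have htime : ∀ i, τ.time i = 2 * i := by
    intro i
    induction i with
    | zero => simp [MarkedTraj.time_zero]
    | succ i ih =>
      rw [τ.time_succ, ih, (hstep i).2.2]
      push_cast
      ring
  have hpow : ∀ i, τ.q i 0 = (-1) ^ i * τ.q 0 0 := by
    intro i
    induction i with
    | zero => simp
    | succ i ih =>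
      rw [(hstep i).1, ih]
      ring
  constructor
  · intro i
    refine ⟨funext fun j => ?_, funext fun j => ?_, ?_⟩
    · rw [Fin.fin_one_eq_zero j]
      exact (hstep i).1
    · rw [Fin.fin_one_eq_zero j]
      exact (hstep i).2.1
    · rw [τ.time_succ, (hstep i).2.2]
  · have hper := τ.q_periodic 0
    rw [zero_add] at hper
    have hm := hpow τ.m
    rw [hper] at hm
    rcases Nat.even_or_odd τ.m with ⟨c, hc⟩ | hodd
    · refine ⟨c, ?_⟩
      rw [htime, hc]
      push_cast
      ring
    · rw [hodd.neg_one_pow] at hm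
      rcases (hq 0).2 with h | h <;> rw [h] at hm <;> norm_num at hm

/-- The splitting of `ℝ^{k+l}` used in the definition of the sums of Hanner polytopes. -/
def Splitting.ofAdd (k l : ℕ) : Splitting (k + l) k l where
  fst := LinearMap.funLeft ℝ ℝ (Fin.castAdd l)
  snd := LinearMap.funLeft ℝ ℝ (Fin.natAdd k)
  join a b := Fin.append a b
  fst_join a b := funext fun i => Fin.append_left a b i
  snd_join a b := funext fun i => Fin.append_right a b i
  dot x y := Fin.sum_univ_add _
  ext x y h1 h2 := funext fun i => by
    induction i using Fin.addCases with
    | left i => exact congrFun h1 i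
    | right i => exact congrFun h2 i

section Sums

variable {k l : ℕ} {K M : Set (Fin k → ℝ)} {L R : Set (Fin l → ℝ)}

theorem isProd_sumInfty (hK : PolarPair k K M) (hL : PolarPair l L R) :
    (Splitting.ofAdd k l).IsProd K M L R (sumInfty K L) (polarSet (sumInfty K L)) where
  left := hK
  right := hL
  mem _ := Iff.rfl
  polar _ := Iff.rfl

theorem single_mem_sumInfty (hK : PolarPair k K M) (hL : PolarPair l L R) (i : Fin (k + l)) :
    Pi.single i 1 ∈ sumInfty K L := by
  induction i using Fin.addCases with
  | left i =>
    constructor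
    · convert hK.single_left i using 1
      ext j
      simp [splitL, Pi.single_apply]
    · convert hL.zero_left using 1
      ext j
      simp [splitR, Pi.single_apply, Fin.ext_iff]
      omega
  | right i =>
    constructor
    · convert hK.zero_left using 1
      ext j
      simp [splitL, Pi.single_apply, Fin.ext_iff]
      omega
    · convert hL.single_left i using 1
      ext j
      simp [splitR, Pi.single_apply]

theorem polarPair_sumInfty (hK : PolarPair k K M) (hL : PolarPair l L R) :
    PolarPair (k + l) (sumInfty K L) (polarSet (sumInfty K L)) where
  pos := Nat.add_pos_left hK.pos l
  mem_right _ := Iff.rfl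
  mem_left q := by
    have h := isProd_sumInfty hK hL
    refine ⟨fun hq p hp => hp q hq, fun hq => ⟨?_, ?_⟩⟩
    · refine (hK.mem_left _).2 fun x hx => ?_
      have := hq _ (h.join_zero_mem hx)
      rw [Splitting.join_dot, zero_dotProduct, add_zero] at this
      exact this
    · refine (hL.mem_left _).2 fun x hx => ?_
      have := hq _ (h.swap.join_zero_mem hx)
      rw [Splitting.join_dot, zero_dotProduct, add_zero] at this
      exact this
  neg_left q hq := ⟨hK.neg_left _ hq.1, hL.neg_left _ hq.2⟩
  single_left := single_mem_sumInfty hK hL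
  single_right i q hq := by
    change Pi.single i 1 ⬝ᵥ q ≤ 1
    rw [single_one_dotProduct]
    induction i using Fin.addCases with
    | left i => exact (le_abs_self _).trans (hK.abs_apply_le_one hq.1 i)
    | right i => exact (le_abs_self _).trans (hL.abs_apply_le_one hq.2 i)

theorem sumOne_eq_polarSet (hK : PolarPair k K M) (hL : PolarPair l L R) :
    sumOne K L = polarSet (sumInfty M R) := by
  have hpol := isProd_sumInfty hK.symm hL.symm
  apply Set.Subset.antisymm
  · refine convexHull_min ?_ ?_
    · rintro x (⟨h1, h2⟩ | ⟨h1, h2⟩)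
      · convert hpol.join_zero_mem h1
        exact (Splitting.ofAdd k l).ext _ _ (Splitting.fst_join _ _ _).symm
          (h2.trans (Splitting.snd_join _ _ _).symm)
      · convert hpol.swap.join_zero_mem h2
        exact (Splitting.ofAdd k l).ext _ _ (h1.trans (Splitting.fst_join _ _ _).symm)
          (Splitting.snd_join _ _ _).symm
    · intro x hx y hy a b ha hb hab z hz
      change (a • x + b • y) ⬝ᵥ z ≤ 1
      rw [add_dotProduct, smul_dotProduct, smul_dotProduct, smul_eq_mul, smul_eq_mul]
      have h1 : x ⬝ᵥ z ≤ 1 := hx z hz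
      have h2 : y ⬝ᵥ z ≤ 1 := hy z hz
      nlinarith
  · intro x hx
    obtain ⟨r, hr, a, ha, hra, hr'⟩ := hK.exists_eq_smul (splitL x)
    obtain ⟨s, hs, b, hb, hsb, hs'⟩ := hL.exists_eq_smul (splitR x)
    have hrs : r + s ≤ 1 := by
      have : r ≤ 1 - s := hr' _ fun p hp => by
        have : s ≤ 1 - p ⬝ᵥ splitL x := hs' _ fun p' hp' => by
          have h1 : splitL x ⬝ᵥ p + splitR x ⬝ᵥ p' ≤ 1 := hpol.le_one hx hp hp'
          rw [dotProduct_comm p, dotProduct_comm p']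
          linarith
        linarith
      linarith
    have hsub := subset_convexHull ℝ ({x : Fin (k + l) → ℝ | splitL x ∈ K ∧ splitR x = 0} ∪
      {x | splitL x = 0 ∧ splitR x ∈ L})
    have ha' : Fin.append a 0 ∈ sumOne K L := hsub (Or.inl
      ⟨by rwa [show splitL (Fin.append a (0 : Fin l → ℝ)) = a from
          (Splitting.ofAdd k l).fst_join a 0], (Splitting.ofAdd k l).snd_join a 0⟩)
    have hb' : Fin.append 0 b ∈ sumOne K L := hsub (Or.inr
      ⟨(Splitting.ofAdd k l).fst_join 0 b, by
        rwa [show splitR (Fin.append (0 : Fin k → ℝ) b) = b from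
          (Splitting.ofAdd k l).snd_join 0 b]⟩)
    have h0 : 0 ∈ sumOne K L := hsub (Or.inl ⟨hK.zero_left, rfl⟩)
    have hconv : Convex ℝ (sumOne K L) := convex_convexHull ℝ _
    have hx' : x = r • Fin.append a 0 + s • Fin.append 0 b := by
      refine (Splitting.ofAdd k l).ext _ _ (hra.trans ?_) (hsb.trans ?_) <;> ext j
      · simp [Splitting.ofAdd, LinearMap.funLeft_apply]
      · simp [Splitting.ofAdd, LinearMap.funLeft_apply]
    have := hconv.sum_mem (t := Finset.univ) (w := ![r, s, 1 - r - s])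
      (z := ![Fin.append a 0, Fin.append 0 b, 0])
      (by intro i _; fin_cases i <;> simp [hr, hs]; linarith)
      (by simp [Fin.sum_univ_three])
      (by intro i _; fin_cases i <;> simp [ha', hb', h0])
    rw [hx']
    simpa [Fin.sum_univ_three] using this

end Sums

theorem IsHanner.polarPair_and_dynamics {n : ℕ} {H : Set (Fin n → ℝ)} (hH : IsHanner n H) :
    PolarPair n H (polarSet H) ∧ CentrallySymmetricDynamics n H (polarSet H) := by
  induction hH with
  | segment => exact ⟨polarPair_segment, dynamics_segment⟩
  | inftySum _ _ ihK ihL =>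
    exact ⟨polarPair_sumInfty ihK.1 ihL.1, (isProd_sumInfty ihK.1 ihL.1).dynamics rfl ihK.2 ihL.2⟩
  | @oneSum k l K L _ _ ihK ihL =>
    have hpair := polarPair_sumInfty ihK.1.symm ihL.1.symm
    have hpolar : polarSet (polarSet (sumInfty (polarSet K) (polarSet L)))
        = sumInfty (polarSet K) (polarSet L) :=
      Set.ext fun p => (hpair.symm.mem_right p).symm
    rw [sumOne_eq_polarSet ihK.1 ihL.1, hpolar]
    exact ⟨hpair.symm, CentrallySymmetricDynamics.symm hpair.symm
      ((isProd_sumInfty ihK.1.symm ihL.1.symm).dynamics rfl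
        (CentrallySymmetricDynamics.symm ihK.1.symm ihK.2)
        (CentrallySymmetricDynamics.symm ihL.1.symm ihL.2))⟩

/-- A classical trajectory, all of whose indices are marked as reflection points. -/
def ClassicalTraj.toMarked {n : ℕ} {H : Set (Fin n → ℝ)} (hH : PolarPair n H (polarSet H))
    (τ : ClassicalTraj n H (polarSet H)) : MarkedTraj n H (polarSet H) where
  m := τ.m
  m_pos := τ.m_pos
  bounce _ := True
  q := τ.q
  p := τ.p
  nq := τ.nq
  np := τ.np
  lam := τ.lam
  mu := τ.mu
  q_mem i := hH.isClosed_left.frontier_subset (τ.q_mem i)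
  p_mem i := hH.symm.isClosed_left.frontier_subset (τ.p_mem i)
  q_periodic := τ.q_periodic
  p_periodic := τ.p_periodic
  bounce_periodic _ := Iff.rfl
  nq_spec i _ := τ.nq_spec i
  np_spec i := by
    have h := τ.np_spec i
    rwa [IsUniqueNormal, show polarSet (polarSet H) = H from
      Set.ext fun q => (hH.symm.mem_right q).symm] at h
  lam_pos i _ := τ.lam_pos i
  mu_pos := τ.mu_pos
  reflection i _ := by
    rw [sub_eq_iff_eq_add'.1 (τ.reflection i), neg_smul, sub_eq_add_neg]
  no_reflection _ h := absurd trivial h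
  motion i := sub_eq_iff_eq_add'.1 (τ.motion i)

theorem ClassicalTraj.length_eq_time {n : ℕ} {H : Set (Fin n → ℝ)}
    (hH : PolarPair n H (polarSet H)) (τ : ClassicalTraj n H (polarSet H)) :
    τ.length = (τ.toMarked hH).time τ.m := by
  refine Finset.sum_congr rfl fun i _ => ?_
  change _ = τ.mu i
  have hnp : IsNormal H (τ.p (i + 1)) (τ.np (i + 1)) := (τ.toMarked hH).np_spec (i + 1)
  rw [τ.motion]
  refine IsGreatest.csSup_eq ⟨⟨τ.p (i + 1), (τ.toMarked hH).p_mem (i + 1), ?_⟩, ?_⟩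
  · change τ.p (i + 1) ⬝ᵥ τ.mu i • τ.np (i + 1) = τ.mu i
    rw [dotProduct_smul, dotProduct_comm, hnp.2.1, smul_eq_mul, mul_one]
  · rintro _ ⟨p, hp, rfl⟩
    change p ⬝ᵥ τ.mu i • τ.np (i + 1) ≤ τ.mu i
    rw [dotProduct_smul, smul_eq_mul]
    exact mul_le_of_le_one_right (τ.mu_pos i).le (hp _ hnp.1)

end Billiard

open Billiard in
/-- Any simple classical closed billiard trajectory in a Hanner polytope `H ⊂ ℝⁿ` with
geometry given by its polar `H°` (1) has length 4, (2) is `2n`-periodic, and (3) is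
centrally symmetric together with its momentum trajectory: `q (i+n) = −q i` and
`p (i+n) = −p i`. -/
theorem hanner_simple_trajectory (n : ℕ) (H : Set (Fin n → ℝ)) (hH : IsHanner n H)
    (τ : ClassicalTraj n H (polarSet H)) (hsimple : τ.IsSimple) :
    τ.length = 4 ∧ τ.m = 2 * n ∧
      (∀ i, τ.q (i + n) = -τ.q i) ∧ (∀ i, τ.p (i + n) = -τ.p i) := by
  obtain ⟨hpair, hdyn⟩ := hH.polarPair_and_dynamics
  obtain ⟨hsym, c, hc⟩ := hdyn (τ.toMarked hpair) fun _ => trivial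
  set t := (τ.toMarked hpair).time with ht
  have hm : (τ.toMarked hpair).m = τ.m := rfl
  have hq : ∀ i, τ.q (i + n) = -τ.q i := fun i => (hsym i).1
  have hp : ∀ i, τ.p (i + n) = -τ.p i := fun i => (hsym i).2.1
  have ht0 : t 0 = 0 := (τ.toMarked hpair).time_zero
  rw [hm] at hc
  have hhalf : ∀ j : ℕ, t (j * n) = 2 * j := by
    intro j
    induction j with
    | zero => simp [ht0]
    | succ j ih =>
      rw [add_mul, one_mul, (hsym _).2.2, ih]
      push_cast
      ring
  have hper : ∀ j : ℕ, t (j * τ.m) = j * (4 * c) := by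
    intro j
    induction j with
    | zero => simp [ht0]
    | succ j ih =>
      have := (τ.toMarked hpair).time_add_period (j * τ.m)
      rw [hm, ← ht, ih, hc] at this
      rw [add_mul, one_mul, this]
      push_cast
      ring
  have hmc : τ.m = 2 * n * c := by
    have h := hper n
    rw [mul_comm n, hhalf] at h
    have h' : (τ.m : ℝ) = 2 * n * c := by linarith
    exact_mod_cast h'
  have hm2 : τ.m = 2 * n := by
    have hle : ¬ 2 * n < τ.m := fun hlt => by
      refine hsimple (2 * n) (by have := hpair.pos; omega) hlt fun i => ?_
      rw [two_mul, ← add_assoc, hq, hq, hp, hp, neg_neg, neg_neg]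
      exact ⟨rfl, rfl⟩
    have hc0 : 0 < c := Nat.pos_of_ne_zero fun h => by
      have := τ.m_pos
      simp [hmc, h] at this
    nlinarith
  refine ⟨?_, hm2, hq, hp⟩
  rw [τ.length_eq_time hpair, hm2, ← ht, hhalf]
  norm_num
end

section
/- Let K ⊂ ℝᵏ and L ⊂ ℝˡ be Hanner polytopes, let Q¹ = (q₁¹,…,q_{2k}¹) with momenta (p₁¹,…,p_{2k}¹) be a simple classical closed billiard trajectory in the configuration K × K°, and Q² = (q₁²,…,q_{2l}²) with momenta (p₁²,…,p_{2l}²) one in L × L°. Set H = K ⊕₁ L, so H° = K° ⊕_∞ L°. Fix the initial coordinate q₁ = (α q₁¹, (1−α) q₁²) and initial momentum p₁ = (β p₁¹ + (1−β) p₂¹, p₁²). Then for every α ∈ (0,1) and all but finitely many β ∈ (0,1), the billiard extension of this initial position in H × H° is a simple classical closed billiard trajectory whose coordinate polygonal line projects onto the first k coordinates to a translate of α·Q¹ and onto the last l coordinates to a translate of (1−α)·Q², and whose momentum polygonal line projects to the momentum polygonal lines of Q¹ and Q² respectively. -/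
open MeasureTheory
open scoped Pointwise

namespace Billiard

section Pairing

variable {n k l : ℕ}

lemma pairing_comm (p q : Fin n → ℝ) : pairing p q = pairing q p :=
  dotProduct_comm p q

lemma pairing_add_left (p p' q : Fin n → ℝ) :
    pairing (p + p') q = pairing p q + pairing p' q :=
  add_dotProduct p p' q

lemma pairing_sub_left (p p' q : Fin n → ℝ) :
    pairing (p - p') q = pairing p q - pairing p' q :=
  sub_dotProduct p p' q

lemma pairing_smul_left (c : ℝ) (p q : Fin n → ℝ) : pairing (c • p) q = c * pairing p q :=
  smul_dotProduct c p q

lemma pairing_sub_right (p q q' : Fin n → ℝ) :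
    pairing p (q - q') = pairing p q - pairing p q' :=
  dotProduct_sub p q q'

lemma pairing_smul_right (c : ℝ) (p q : Fin n → ℝ) : pairing p (c • q) = c * pairing p q :=
  dotProduct_smul c p q

@[simp] lemma pairing_zero_left (q : Fin n → ℝ) : pairing 0 q = 0 :=
  zero_dotProduct q

@[simp] lemma pairing_zero_right (p : Fin n → ℝ) : pairing p 0 = 0 :=
  dotProduct_zero p

@[simp] lemma splitL_append (x : Fin k → ℝ) (y : Fin l → ℝ) : splitL (Fin.append x y) = x := by
  ext i; simp [splitL]

@[simp] lemma splitR_append (x : Fin k → ℝ) (y : Fin l → ℝ) : splitR (Fin.append x y) = y := by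
  ext i; simp [splitR]

lemma append_split (z : Fin (k + l) → ℝ) : Fin.append (splitL z) (splitR z) = z :=
  Fin.append_castAdd_natAdd

lemma pairing_split (p q : Fin (k + l) → ℝ) :
    pairing p q = pairing (splitL p) (splitL q) + pairing (splitR p) (splitR q) := by
  simp [pairing, splitL, splitR, Fin.sum_univ_add]

lemma append_ext {x y : Fin (k + l) → ℝ} (hl : splitL x = splitL y) (hr : splitR x = splitR y) :
    x = y := by
  rw [← append_split x, ← append_split y, hl, hr]

/-- `Fin.append` as a linear map. -/
def appendLin (k l : ℕ) : ((Fin k → ℝ) × (Fin l → ℝ)) →ₗ[ℝ] (Fin (k + l) → ℝ) where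
  toFun z := Fin.append z.1 z.2
  map_add' _ _ := append_ext (by ext; simp [splitL]) (by ext; simp [splitR])
  map_smul' _ _ := append_ext (by ext; simp [splitL]) (by ext; simp [splitR])

/-- `splitL` as a linear map. -/
def splitLLin (k l : ℕ) : (Fin (k + l) → ℝ) →ₗ[ℝ] (Fin k → ℝ) where
  toFun := splitL
  map_add' _ _ := rfl
  map_smul' _ _ := rfl

@[simp] lemma splitLLin_apply (z : Fin (k + l) → ℝ) : splitLLin k l z = splitL z := rfl

/-- `splitR` as a linear map. -/
def splitRLin (k l : ℕ) : (Fin (k + l) → ℝ) →ₗ[ℝ] (Fin l → ℝ) where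
  toFun := splitR
  map_add' _ _ := rfl
  map_smul' _ _ := rfl

@[simp] lemma splitRLin_apply (z : Fin (k + l) → ℝ) : splitRLin k l z = splitR z := rfl

/-- The functional `⟨·, q⟩` as a linear map. -/
noncomputable def pairingLin (q : Fin n → ℝ) : (Fin n → ℝ) →ₗ[ℝ] ℝ where
  toFun p := pairing p q
  map_add' p p' := pairing_add_left p p' q
  map_smul' c p := pairing_smul_left c p q

end Pairing

section Polar

variable {n k l : ℕ}

lemma zero_mem_polarSet (A : Set (Fin n → ℝ)) : (0 : Fin n → ℝ) ∈ polarSet A := by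
  intro q _; simp

lemma polarSet_convexHull (S : Set (Fin n → ℝ)) :
    polarSet (convexHull ℝ S) = polarSet S := by
  apply Set.Subset.antisymm
  · exact fun p hp q hq => hp q (subset_convexHull ℝ S hq)
  · intro p hp q hq
    obtain ⟨y, hy, hle⟩ := ((pairingLin p).convexOn convex_univ).exists_ge_of_mem_convexHull
      (Set.subset_univ S) hq
    have h := hp y hy
    simp only [pairingLin, LinearMap.coe_mk, AddHom.coe_mk] at hle
    rw [pairing_comm] at h ⊢
    exact hle.trans h

lemma subset_bipolar (A : Set (Fin n → ℝ)) : A ⊆ polarSet (polarSet A) := by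
  intro x hx p hp
  rw [pairing_comm]
  exact hp x hx

/-- The bipolar theorem for closed convex sets containing the origin. -/
lemma bipolar_eq {A : Set (Fin n → ℝ)} (hc : Convex ℝ A) (hcl : IsClosed A)
    (h0 : (0 : Fin n → ℝ) ∈ A) : polarSet (polarSet A) = A := by
  apply Set.Subset.antisymm _ (subset_bipolar A)
  intro x hx
  by_contra hxA
  obtain ⟨f, u, hf, hu⟩ := geometric_hahn_banach_closed_point hc hcl hxA
  have hu0 : 0 < u := by simpa using hf 0 h0
  set g : Fin n → ℝ := fun i => f (Pi.single i 1) with hg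
  have hfg : ∀ y, f y = pairing g y := by
    intro y
    conv_lhs => rw [pi_eq_sum_univ' y]
    simp only [map_sum, map_smul, pairing, hg, smul_eq_mul]
    refine Finset.sum_congr rfl fun i _ => ?_
    rw [mul_comm]
  have hmem : u⁻¹ • g ∈ polarSet A := by
    intro y hy
    rw [pairing_smul_left, ← hfg, inv_mul_le_iff₀ hu0]
    simpa using (hf y hy).le
  have h := hx _ hmem
  rw [pairing_comm, pairing_smul_left, ← hfg, inv_mul_le_iff₀ hu0] at h
  linarith

lemma polarSet_sumOne (K : Set (Fin k → ℝ)) (L : Set (Fin l → ℝ)) :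
    polarSet (sumOne K L) = sumInfty (polarSet K) (polarSet L) := by
  rw [sumOne, polarSet_convexHull]
  apply Set.Subset.antisymm
  · intro p hp
    refine ⟨fun x hx => ?_, fun y hy => ?_⟩
    · simpa [pairing_split p] using hp (Fin.append x 0) (Or.inl (by simpa using hx))
    · simpa [pairing_split p] using hp (Fin.append 0 y) (Or.inr (by simpa using hy))
  · rintro p ⟨h1, h2⟩ x (⟨hx, hx'⟩ | ⟨hx, hx'⟩)
    · simpa [pairing_split p, hx'] using h1 _ hx
    · simpa [pairing_split p, hx] using h2 _ hx'

lemma sumInfty_convexHull (U : Set (Fin k → ℝ)) (W : Set (Fin l → ℝ)) :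
    sumInfty (convexHull ℝ U) (convexHull ℝ W) =
      convexHull ℝ (appendLin k l '' (U ×ˢ W)) := by
  rw [← LinearMap.image_convexHull, convexHull_prod]
  ext x
  constructor
  · rintro ⟨h1, h2⟩
    exact ⟨(splitL x, splitR x), ⟨h1, h2⟩, append_split x⟩
  · rintro ⟨⟨a, b⟩, ⟨h1, h2⟩, rfl⟩
    exact ⟨by simpa [appendLin] using h1, by simpa [appendLin] using h2⟩

lemma sumOne_eq_convexHull_image (K : Set (Fin k → ℝ)) (L : Set (Fin l → ℝ)) :
    sumOne K L = convexHull ℝ ((appendLin k l ∘ₗ LinearMap.inl ℝ _ _) '' K ∪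
      (appendLin k l ∘ₗ LinearMap.inr ℝ _ _) '' L) := by
  rw [sumOne]
  congr 2
  · ext x
    constructor
    · rintro ⟨h1, h2⟩
      exact ⟨splitL x, h1, append_ext (by simp [appendLin]) (by simp [appendLin, h2])⟩
    · rintro ⟨a, h1, rfl⟩
      exact ⟨by simpa [appendLin] using h1, by simp [appendLin]⟩
  · ext x
    constructor
    · rintro ⟨h1, h2⟩
      exact ⟨splitR x, h2, append_ext (by simp [appendLin, h1]) (by simp [appendLin])⟩
    · rintro ⟨a, h1, rfl⟩
      exact ⟨by simp [appendLin], by simpa [appendLin] using h1⟩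

lemma sumOne_convexHull (V : Set (Fin k → ℝ)) (W : Set (Fin l → ℝ)) :
    sumOne (convexHull ℝ V) (convexHull ℝ W) =
      convexHull ℝ ((appendLin k l ∘ₗ LinearMap.inl ℝ _ _) '' V ∪
        (appendLin k l ∘ₗ LinearMap.inr ℝ _ _) '' W) := by
  rw [sumOne_eq_convexHull_image, LinearMap.image_convexHull, LinearMap.image_convexHull,
    convexHull_convexHull_union_left, convexHull_convexHull_union_right]

lemma append_mem_sumOne {K : Set (Fin k → ℝ)} {L : Set (Fin l → ℝ)} {a : Fin k → ℝ}
    {b : Fin l → ℝ} (ha : a ∈ K) (hb : b ∈ L) {s t : ℝ} (hs : 0 ≤ s) (ht : 0 ≤ t)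
    (hst : s + t = 1) : Fin.append (s • a) (t • b) ∈ sumOne K L := by
  have h1 : Fin.append a 0 ∈ sumOne K L := subset_convexHull ℝ _ (Or.inl (by simpa using ha))
  have h2 : Fin.append 0 b ∈ sumOne K L := subset_convexHull ℝ _ (Or.inr (by simpa using hb))
  have h := (convex_convexHull ℝ _ : Convex ℝ (sumOne K L)) h1 h2 hs ht hst
  have e : Fin.append (s • a) (t • b) = s • Fin.append a 0 + t • Fin.append 0 b :=
    append_ext (by ext; simp [splitL]) (by ext; simp [splitR])
  rw [e]
  exact h

lemma exists_of_mem_sumOne {K : Set (Fin k → ℝ)} {L : Set (Fin l → ℝ)} (hK : Convex ℝ K)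
    (hL : Convex ℝ L) (hK0 : K.Nonempty) (hL0 : L.Nonempty) {w : Fin (k + l) → ℝ}
    (hw : w ∈ sumOne K L) :
    ∃ a ∈ K, ∃ b ∈ L, ∃ s t : ℝ, 0 ≤ s ∧ 0 ≤ t ∧ s + t = 1 ∧
      w = Fin.append (s • a) (t • b) := by
  rw [sumOne_eq_convexHull_image, convexHull_union (hK0.image _) (hL0.image _),
    (hK.linear_image _).convexHull_eq, (hL.linear_image _).convexHull_eq, mem_convexJoin] at hw
  obtain ⟨_, ⟨a, ha, rfl⟩, _, ⟨b, hb, rfl⟩, s, t, hs, ht, hst, rfl⟩ := hw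
  exact ⟨a, ha, b, hb, s, t, hs, ht, hst,
    append_ext (by ext; simp [appendLin, splitL]) (by ext; simp [appendLin, splitR])⟩

end Polar

section DualPair

variable {n k l : ℕ}

/-- All coordinates of `x` are rational. -/
def IsRational (x : Fin n → ℝ) : Prop := ∀ i, ∃ r : ℚ, x i = r

lemma IsRational.append {x : Fin k → ℝ} {y : Fin l → ℝ} (hx : IsRational x)
    (hy : IsRational y) : IsRational (Fin.append x y) := by
  intro i
  refine Fin.addCases (fun i => ?_) (fun i => ?_) i
  · simpa using hx i
  · simpa using hy i

lemma isRational_zero : IsRational (0 : Fin n → ℝ) := fun _ => ⟨0, by simp⟩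

/-- A pair of mutually polar polytopes, spanned by finitely many rational points `V` and `U`,
no point of `V` being orthogonal to a point of `U`. -/
structure DualPair (A B : Set (Fin n → ℝ)) (V U : Set (Fin n → ℝ)) : Prop where
  left_eq : A = polarSet B
  right_eq : B = polarSet A
  finite_left : V.Finite
  finite_right : U.Finite
  hull_left : A = convexHull ℝ V
  hull_right : B = convexHull ℝ U
  rational_left : ∀ v ∈ V, IsRational v
  rational_right : ∀ u ∈ U, IsRational u
  pairing_ne : ∀ v ∈ V, ∀ u ∈ U, pairing v u ≠ 0

namespace DualPair

variable {A B V U : Set (Fin n → ℝ)}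

lemma symm (h : DualPair A B V U) : DualPair B A U V where
  left_eq := h.right_eq
  right_eq := h.left_eq
  finite_left := h.finite_right
  finite_right := h.finite_left
  hull_left := h.hull_right
  hull_right := h.hull_left
  rational_left := h.rational_right
  rational_right := h.rational_left
  pairing_ne u hu v hv := by rw [pairing_comm]; exact h.pairing_ne v hv u hu

lemma zero_mem (h : DualPair A B V U) : (0 : Fin n → ℝ) ∈ A := by
  rw [h.left_eq]; exact zero_mem_polarSet B

lemma convex (h : DualPair A B V U) : Convex ℝ A := by
  rw [h.hull_left]; exact convex_convexHull ℝ V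

lemma isClosed (h : DualPair A B V U) : IsClosed A := by
  rw [h.hull_left]; exact (h.finite_left.isCompact_convexHull ℝ).isClosed

lemma pairing_le (h : DualPair A B V U) {q p : Fin n → ℝ} (hq : q ∈ A) (hp : p ∈ B) :
    pairing p q ≤ 1 := by
  rw [h.right_eq] at hp; exact hp q hq

lemma isUniqueNormal_mem (h : DualPair A B V U) {q u : Fin n → ℝ} (hq : q ∈ A)
    (hu : IsUniqueNormal A q u) : u ∈ U := by
  obtain ⟨hu1, hu2, hu3⟩ := hu
  rw [← h.right_eq] at hu1 hu3
  rw [h.hull_right] at hu1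
  obtain ⟨y, hy, hle⟩ := ((pairingLin q).convexOn convex_univ).exists_ge_of_mem_convexHull
    (Set.subset_univ U) hu1
  simp only [pairingLin, LinearMap.coe_mk, AddHom.coe_mk, hu2] at hle
  have hyB : y ∈ B := by rw [h.hull_right]; exact subset_convexHull ℝ U hy
  rw [← hu3 y hyB (le_antisymm (h.pairing_le hq hyB) hle)]
  exact hy

lemma oneSum {K K' V U : Set (Fin k → ℝ)} {L L' W Z : Set (Fin l → ℝ)}
    (hK : DualPair K K' V U) (hL : DualPair L L' W Z) :
    DualPair (sumOne K L) (sumInfty K' L')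
      ((appendLin k l ∘ₗ LinearMap.inl ℝ _ _) '' V ∪
        (appendLin k l ∘ₗ LinearMap.inr ℝ _ _) '' W)
      (appendLin k l '' (U ×ˢ Z)) := by
  have hull : sumOne K L = convexHull ℝ ((appendLin k l ∘ₗ LinearMap.inl ℝ _ _) '' V ∪
        (appendLin k l ∘ₗ LinearMap.inr ℝ _ _) '' W) := by
    rw [hK.hull_left, hL.hull_left, sumOne_convexHull]
  have fin : ((appendLin k l ∘ₗ LinearMap.inl ℝ _ _) '' V ∪
        (appendLin k l ∘ₗ LinearMap.inr ℝ _ _) '' W).Finite :=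
    (hK.finite_left.image _).union (hL.finite_left.image _)
  have right_eq : sumInfty K' L' = polarSet (sumOne K L) := by
    rw [polarSet_sumOne, ← hK.right_eq, ← hL.right_eq]
  refine ⟨?_, right_eq, fin, (hK.finite_right.prod hL.finite_right).image _, hull, ?_, ?_, ?_, ?_⟩
  · rw [right_eq, bipolar_eq]
    · rw [hull]; exact convex_convexHull ℝ _
    · rw [hull]; exact (fin.isCompact_convexHull ℝ).isClosed
    · have h := append_mem_sumOne hK.zero_mem hL.zero_mem zero_le_one le_rfl (add_zero (1 : ℝ))
      convert h using 1
      exact append_ext (by simp; rfl) (by simp; rfl)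
  · rw [hK.hull_right, hL.hull_right, sumInfty_convexHull]
  · rintro _ (⟨v, hv, rfl⟩ | ⟨w, hw, rfl⟩)
    · exact (hK.rational_left v hv).append isRational_zero
    · exact isRational_zero.append (hL.rational_left w hw)
  · rintro _ ⟨⟨u, z⟩, ⟨hu, hz⟩, rfl⟩
    exact (hK.rational_right u hu).append (hL.rational_right z hz)
  · rintro _ (⟨v, hv, rfl⟩ | ⟨w, hw, rfl⟩) _ ⟨⟨u, z⟩, ⟨hu, hz⟩, rfl⟩
    · simpa [pairing_split, appendLin] using hK.pairing_ne v hv u hu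
    · simpa [pairing_split, appendLin] using hL.pairing_ne w hw z hz

lemma segment_pair :
    DualPair {x : Fin 1 → ℝ | |x 0| ≤ 1} {x : Fin 1 → ℝ | |x 0| ≤ 1}
      {fun _ => -1, fun _ => 1} {fun _ => -1, fun _ => 1} := by
  have polar : {x : Fin 1 → ℝ | |x 0| ≤ 1} = polarSet {x : Fin 1 → ℝ | |x 0| ≤ 1} := by
    ext p
    simp only [polarSet, pairing, Set.mem_ofPred_eq, Finset.univ_unique, Fin.default_eq_zero,
      Finset.sum_singleton]
    constructor
    · intro hp q hq
      calc p 0 * q 0 ≤ |p 0 * q 0| := le_abs_self _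
        _ = |p 0| * |q 0| := abs_mul _ _
        _ ≤ 1 := mul_le_one₀ hp (abs_nonneg _) hq
    · intro h
      have h1 := h (fun _ => 1) (by simp)
      have h2 := h (fun _ => -1) (by simp)
      rw [abs_le]
      constructor <;> linarith
  have hull : {x : Fin 1 → ℝ | |x 0| ≤ 1} =
      convexHull ℝ {(fun _ => -1 : Fin 1 → ℝ), fun _ => 1} := by
    rw [convexHull_pair]
    ext x
    constructor
    · intro hx
      obtain ⟨h1, h2⟩ := abs_le.mp (show |x 0| ≤ 1 from hx)
      refine ⟨(1 - x 0) / 2, (1 + x 0) / 2, by linarith, by linarith, by ring, ?_⟩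
      ext i
      rw [Subsingleton.elim i 0]
      simp only [Pi.add_apply, Pi.smul_apply, smul_eq_mul]
      ring
    · rintro ⟨a, b, ha, hb, hab, rfl⟩
      simp only [Set.mem_ofPred_eq, Pi.add_apply, Pi.smul_apply, smul_eq_mul, abs_le]
      constructor <;> linarith
  have rat : ∀ v ∈ ({fun _ => -1, fun _ => 1} : Set (Fin 1 → ℝ)), IsRational v := by
    rintro v (rfl | rfl) i
    · exact ⟨-1, by simp⟩
    · exact ⟨1, by simp⟩
  refine ⟨polar, polar, by simp, by simp, hull, hull, rat, rat, ?_⟩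
  rintro v (rfl | rfl) u (rfl | rfl) <;> simp [pairing]

end DualPair

lemma IsHanner.exists_dualPair {A : Set (Fin n → ℝ)} (hA : IsHanner n A) :
    ∃ V U, DualPair A (polarSet A) V U := by
  suffices h : ∃ B V U, DualPair A B V U by
    obtain ⟨B, V, U, h⟩ := h
    exact ⟨V, U, h.right_eq ▸ h⟩
  induction hA with
  | segment => exact ⟨_, _, _, DualPair.segment_pair⟩
  | inftySum _ _ ihK ihL =>
    obtain ⟨_, _, _, hK⟩ := ihK
    obtain ⟨_, _, _, hL⟩ := ihL
    exact ⟨_, _, _, (hK.symm.oneSum hL.symm).symm⟩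
  | oneSum _ _ ihK ihL =>
    obtain ⟨_, _, _, hK⟩ := ihK
    obtain ⟨_, _, _, hL⟩ := ihL
    exact ⟨_, _, _, hK.oneSum hL⟩

end DualPair

section Normals

variable {n k l : ℕ}

open Filter Topology in
lemma mem_frontier_of_pairing_eq_one {A : Set (Fin n → ℝ)} {q u : Fin n → ℝ} (hq : q ∈ A)
    (hu : u ∈ polarSet A) (h : pairing u q = 1) : q ∈ frontier A := by
  refine ⟨subset_closure hq, fun hint => ?_⟩
  have hc : Tendsto (fun c : ℝ => c • q) (𝓝[>] 1) (𝓝 q) := by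
    have : Continuous fun c : ℝ => c • q := by fun_prop
    simpa using (this.tendsto 1).mono_left nhdsWithin_le_nhds
  have hev : ∀ᶠ c in 𝓝[>] (1 : ℝ), c • q ∈ A := hc (mem_interior_iff_mem_nhds.mp hint)
  obtain ⟨c, hcA, hc1⟩ := (hev.and self_mem_nhdsWithin).exists
  have h' := hu _ hcA
  rw [pairing_smul_right, h] at h'
  have : (1 : ℝ) < c := hc1
  linarith

lemma isUniqueNormal_sumOne {K : Set (Fin k → ℝ)} {L : Set (Fin l → ℝ)} {q u : Fin k → ℝ}
    {r w : Fin l → ℝ} (hq : q ∈ K) (hr : r ∈ L) (hu : IsUniqueNormal K q u)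
    (hw : IsUniqueNormal L r w) {α : ℝ} (hα : α ∈ Set.Ioo (0 : ℝ) 1) :
    IsUniqueNormal (sumOne K L) (Fin.append (α • q) ((1 - α) • r)) (Fin.append u w) := by
  obtain ⟨h0, h1⟩ := hα
  obtain ⟨hu1, hu2, hu3⟩ := hu
  obtain ⟨hw1, hw2, hw3⟩ := hw
  refine ⟨?_, ?_, ?_⟩
  · rw [polarSet_sumOne]
    exact ⟨by simpa using hu1, by simpa using hw1⟩
  · simp [pairing_split, pairing_smul_right, hu2, hw2]
  · intro v hv hv1
    rw [polarSet_sumOne] at hv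
    simp only [pairing_split v, splitL_append, splitR_append, pairing_smul_right] at hv1
    have e1 := hv.1 q hq
    have e2 := hv.2 r hr
    have f1 : pairing (splitL v) q = 1 := by nlinarith
    have f2 : pairing (splitR v) r = 1 := by nlinarith
    exact append_ext (by simpa using hu3 _ hv.1 f1) (by simpa using hw3 _ hv.2 f2)

variable {K K' V U : Set (Fin k → ℝ)} {L L' W Z : Set (Fin l → ℝ)}

lemma isUniqueNormal_sumInfty_left (hK : DualPair K K' V U) (hL : DualPair L L' W Z)
    {p v : Fin k → ℝ} {r : Fin l → ℝ} (hp : p ∈ K') (hv : IsUniqueNormal K' p v)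
    (hr : ∀ b ∈ L, pairing b r < 1) :
    IsUniqueNormal (sumInfty K' L') (Fin.append p r) (Fin.append v 0) := by
  obtain ⟨hv1, hv2, hv3⟩ := hv
  have hH := (hK.oneSum hL).left_eq
  rw [← hK.left_eq] at hv1 hv3
  refine ⟨?_, by simp [pairing_split, hv2], ?_⟩
  · rw [← hH]
    have h := append_mem_sumOne hv1 hL.zero_mem zero_le_one le_rfl (add_zero (1 : ℝ))
    simpa using h
  · intro w hw hw1
    rw [← hH] at hw
    obtain ⟨a, ha, b, hb, s, t, hs, ht, hst, rfl⟩ := exists_of_mem_sumOne hK.convex hL.convex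
      ⟨0, hK.zero_mem⟩ ⟨0, hL.zero_mem⟩ hw
    simp only [pairing_split, splitL_append, splitR_append, pairing_smul_left] at hw1
    have e1 := hK.symm.pairing_le hp ha
    have e2 := hr b hb
    have ht0 : t = 0 := by
      by_contra hne
      have : 0 < t := lt_of_le_of_ne ht (Ne.symm hne)
      nlinarith
    subst ht0
    obtain rfl : s = 1 := by linarith
    have := hv3 a ha (by linarith)
    simp [this]

lemma isUniqueNormal_sumInfty_right (hK : DualPair K K' V U) (hL : DualPair L L' W Z)
    {p : Fin k → ℝ} {r v : Fin l → ℝ} (hr : r ∈ L') (hv : IsUniqueNormal L' r v)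
    (hp : ∀ a ∈ K, pairing a p < 1) :
    IsUniqueNormal (sumInfty K' L') (Fin.append p r) (Fin.append 0 v) := by
  obtain ⟨hv1, hv2, hv3⟩ := hv
  have hH := (hK.oneSum hL).left_eq
  rw [← hL.left_eq] at hv1 hv3
  refine ⟨?_, by simp [pairing_split, hv2], ?_⟩
  · rw [← hH]
    have h := append_mem_sumOne hK.zero_mem hv1 le_rfl zero_le_one (zero_add (1 : ℝ))
    simpa using h
  · intro w hw hw1
    rw [← hH] at hw
    obtain ⟨a, ha, b, hb, s, t, hs, ht, hst, rfl⟩ := exists_of_mem_sumOne hK.convex hL.convex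
      ⟨0, hK.zero_mem⟩ ⟨0, hL.zero_mem⟩ hw
    simp only [pairing_split, splitL_append, splitR_append, pairing_smul_left] at hw1
    have e1 := hL.symm.pairing_le hr hb
    have e2 := hp a ha
    have hs0 : s = 0 := by
      by_contra hne
      have : 0 < s := lt_of_le_of_ne hs (Ne.symm hne)
      nlinarith
    subst hs0
    obtain rfl : t = 1 := by linarith
    have := hv3 b hb (by linarith)
    simp [this]

end Normals

section Trajectory

variable {n : ℕ} {A : Set (Fin n → ℝ)} {V U : Set (Fin n → ℝ)}

/-- The momentum time elapsed before the `i`-th bounce. -/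
noncomputable def ClassicalTraj.time (τ : ClassicalTraj n A (polarSet A)) (i : ℕ) : ℝ :=
  ∑ j ∈ Finset.range i, τ.lam j

namespace ClassicalTraj

variable (τ : ClassicalTraj n A (polarSet A))

lemma time_succ (i : ℕ) : τ.time (i + 1) = τ.time i + τ.lam i :=
  Finset.sum_range_succ _ _

lemma time_strictMono : StrictMono τ.time :=
  strictMono_nat_of_lt_succ fun i => by rw [time_succ]; linarith [τ.lam_pos i]

@[simp] lemma time_zero : τ.time 0 = 0 := by simp [time]

lemma nq_periodic (i : ℕ) : τ.nq (i + τ.m) = τ.nq i := by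
  have h := τ.nq_spec (i + τ.m)
  rw [τ.q_periodic] at h
  exact (τ.nq_spec i).2.2 _ h.1 h.2.1

lemma lam_eq (i : ℕ) : τ.lam i = -pairing (τ.p (i + 1) - τ.p i) (τ.q i) := by
  rw [τ.reflection, pairing_smul_left, (τ.nq_spec i).2.1]
  ring

lemma lam_periodic (i : ℕ) : τ.lam (i + τ.m) = τ.lam i := by
  rw [lam_eq, lam_eq, show i + τ.m + 1 = i + 1 + τ.m by ring, τ.p_periodic, τ.p_periodic,
    τ.q_periodic]

lemma time_add_m (i : ℕ) : τ.time (i + τ.m) = τ.time i + τ.time τ.m := by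
  induction i with
  | zero => simp
  | succ i ih => rw [show i + 1 + τ.m = i + τ.m + 1 by ring, time_succ, ih, lam_periodic,
      time_succ]; ring

lemma time_add_mul (a i : ℕ) : τ.time (i + a * τ.m) = τ.time i + a * τ.time τ.m := by
  induction a with
  | zero => simp
  | succ a ih =>
    rw [show i + (a + 1) * τ.m = i + a * τ.m + τ.m by ring, time_add_m, ih]; push_cast; ring

lemma time_m_pos : 0 < τ.time τ.m := by
  simpa using τ.time_strictMono τ.m_pos

lemma p_succ (i : ℕ) : τ.p (i + 1) = τ.p i - (τ.time (i + 1) - τ.time i) • τ.nq i := by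
  rw [time_succ, add_sub_cancel_left, sub_eq_add_neg, ← neg_smul, ← τ.reflection]
  abel

lemma q_mem_set (h : DualPair A (polarSet A) V U) (i : ℕ) : τ.q i ∈ A :=
  h.isClosed.frontier_subset (τ.q_mem i)

lemma p_mem_polarSet (h : DualPair A (polarSet A) V U) (i : ℕ) : τ.p i ∈ polarSet A :=
  h.symm.isClosed.frontier_subset (τ.p_mem i)

lemma nq_mem (h : DualPair A (polarSet A) V U) (i : ℕ) : τ.nq i ∈ U :=
  h.isUniqueNormal_mem (τ.q_mem_set h i) (τ.nq_spec i)

lemma np_mem (h : DualPair A (polarSet A) V U) (i : ℕ) : τ.np i ∈ V :=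
  h.symm.isUniqueNormal_mem (τ.p_mem_polarSet h i) (τ.np_spec i)

/-- Between two bounces the momentum is in the interior of `A°`. -/
lemma pairing_lt_one (h : DualPair A (polarSet A) V U) {i : ℕ} {s : ℝ} (h0 : 0 < s)
    (h1 : s < τ.lam i) {b : Fin n → ℝ} (hb : b ∈ A) : pairing b (τ.p i - s • τ.nq i) < 1 := by
  have e0 := h.symm.pairing_le (τ.p_mem_polarSet h i) hb
  have e1 := h.symm.pairing_le (τ.p_mem_polarSet h (i + 1)) hb
  rw [p_succ, time_succ, add_sub_cancel_left, pairing_sub_right, pairing_smul_right] at e1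
  rw [pairing_sub_right, pairing_smul_right]
  rcases lt_trichotomy (pairing b (τ.nq i)) 0 with hneg | hzero | hpos
  · nlinarith
  · rw [hzero, mul_zero, sub_zero]
    refine lt_of_le_of_ne e0 fun heq => ?_
    have hbn : b = τ.np i := (τ.np_spec i).2.2 b (by rwa [← h.left_eq]) heq
    exact h.pairing_ne _ (τ.np_mem h i) _ (τ.nq_mem h i) (hbn ▸ hzero)
  · nlinarith

lemma sum_pairing_by_parts {m : ℕ} (p q : ℕ → Fin n → ℝ) (hp : p m = p 0) (hq : q m = q 0) :
    ∑ i ∈ Finset.range m, pairing (p (i + 1)) (q (i + 1) - q i) =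
      -∑ i ∈ Finset.range m, pairing (p (i + 1) - p i) (q i) := by
  have h := Finset.sum_range_sub (fun i => pairing (p i) (q i)) m
  simp only [hp, hq, sub_self] at h
  rw [← add_eq_zero_iff_eq_neg, ← Finset.sum_add_distrib, ← h]
  refine Finset.sum_congr rfl fun i _ => ?_
  rw [pairing_sub_right, pairing_sub_left]
  ring

lemma map_pairing_of_isRational (φ : ℝ →ₗ[ℚ] ℝ) {u : Fin n → ℝ} (hu : IsRational u)
    (x : Fin n → ℝ) : pairing (fun i => φ (x i)) u = φ (pairing x u) := by
  simp only [pairing, map_sum]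
  refine Finset.sum_congr rfl fun i _ => ?_
  obtain ⟨r, hr⟩ := hu i
  rw [hr, mul_comm, mul_comm (x i), ← Rat.smul_def, ← Rat.smul_def, map_smul]

/-- The total length of a trajectory between rational polytopes is rational: a `ℚ`-linear
retraction of `ℝ` onto `ℚ` maps the momenta to another closed solution of the same system of
linear equations, and the length is the same for all solutions. -/
lemma exists_rat_time_m (h : DualPair A (polarSet A) V U) : ∃ r : ℚ, τ.time τ.m = r := by
  obtain ⟨g, hg⟩ := LinearMap.exists_leftInverse_of_injective (Algebra.linearMap ℚ ℝ)
    (LinearMap.ker_eq_bot.mpr (algebraMap ℚ ℝ).injective)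
  have main : ∀ φ : ℝ →ₗ[ℚ] ℝ, φ 1 = 1 →
      ∑ i ∈ Finset.range τ.m, τ.mu i = φ (τ.time τ.m) := by
    intro φ hφ
    have hparts := sum_pairing_by_parts (m := τ.m) (fun i j => φ (τ.p i j)) τ.q
      (by simpa using congrArg (fun x : Fin n → ℝ => fun j => φ (x j)) (τ.p_periodic 0))
      (by simpa using τ.q_periodic 0)
    have hl : ∀ i, pairing (fun j => φ (τ.p (i + 1) j)) (τ.q (i + 1) - τ.q i) = τ.mu i := by
      intro i
      rw [τ.motion, pairing_smul_right,
        map_pairing_of_isRational φ (h.rational_left _ (τ.np_mem h _)), pairing_comm,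
        (τ.np_spec (i + 1)).2.1, hφ, mul_one]
    have hr : ∀ i, pairing ((fun j => φ (τ.p (i + 1) j)) - fun j => φ (τ.p i j)) (τ.q i) =
        -φ (τ.lam i) := by
      intro i
      have e : ((fun j => φ (τ.p (i + 1) j)) - fun j => φ (τ.p i j)) =
          (-φ (τ.lam i)) • τ.nq i := by
        ext j
        have hj := congrFun (τ.reflection i) j
        obtain ⟨r, hr⟩ := h.rational_right _ (τ.nq_mem h i) j
        simp only [Pi.sub_apply, Pi.smul_apply, smul_eq_mul] at hj ⊢
        rw [← map_sub, hj, hr, mul_comm, ← Rat.smul_def, map_smul, map_neg, Rat.smul_def,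
          mul_comm]
      rw [e, pairing_smul_left, (τ.nq_spec i).2.1, mul_one]
    simp only [hl, hr, Finset.sum_neg_distrib, neg_neg] at hparts
    rw [hparts, time, map_sum]
  refine ⟨g (τ.time τ.m), ?_⟩
  have e1 := main LinearMap.id rfl
  have e2 := main (Algebra.linearMap ℚ ℝ ∘ₗ g) (by
    have := LinearMap.congr_fun hg 1
    simp at this
    simp [this])
  simpa using e1.symm.trans e2

/-- A trajectory can be replaced by a simple one with the same bounces. -/
lemma exists_isSimple : ∃ σ : ClassicalTraj n A (polarSet A),
    σ.IsSimple ∧ σ.q = τ.q ∧ σ.p = τ.p := by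
  classical
  have hex : ∃ d, 0 < d ∧ ∀ i, τ.q (i + d) = τ.q i ∧ τ.p (i + d) = τ.p i :=
    ⟨τ.m, τ.m_pos, fun i => ⟨τ.q_periodic i, τ.p_periodic i⟩⟩
  refine ⟨{ τ with
    m := Nat.find hex
    m_pos := (Nat.find_spec hex).1
    q_periodic := fun i => ((Nat.find_spec hex).2 i).1
    p_periodic := fun i => ((Nat.find_spec hex).2 i).2 }, ?_, rfl, rfl⟩
  intro d hd hlt hper
  exact Nat.find_min hex hlt ⟨hd, hper⟩

lemma iUnion_range_segment {m : ℕ} (hm : 0 < m) {x : ℕ → Fin n → ℝ}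
    (hx : ∀ i, x (i + m) = x i) :
    ⋃ i ∈ Finset.range m, segment ℝ (x i) (x (i + 1)) = ⋃ i, segment ℝ (x i) (x (i + 1)) := by
  apply Set.Subset.antisymm
  · exact Set.iUnion₂_subset fun i _ => Set.subset_iUnion (fun i => segment ℝ (x i) (x (i + 1))) i
  · refine Set.iUnion_subset fun i => ?_
    have hp : Function.Periodic (fun i => segment ℝ (x i) (x (i + 1))) m := by
      intro i
      simp only [hx, show i + m + 1 = i + 1 + m by ring]
    rw [← hp.map_mod_nat i]
    exact Set.subset_biUnion_of_mem (u := fun i => segment ℝ (x i) (x (i + 1)))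
      (Finset.mem_coe.mpr (Finset.mem_range.mpr (Nat.mod_lt i hm)))

lemma coordTrace_eq : τ.coordTrace = ⋃ i, segment ℝ (τ.q i) (τ.q (i + 1)) :=
  iUnion_range_segment τ.m_pos τ.q_periodic

lemma momTrace_eq : τ.momTrace = ⋃ i, segment ℝ (τ.p i) (τ.p (i + 1)) :=
  iUnion_range_segment τ.m_pos τ.p_periodic

end ClassicalTraj

end Trajectory

section Interlace

variable {n : ℕ}

/-- `(i n, j n)` counts the terms of the increasing sequences `A` and `B` among the first terms of
their increasing rearrangement. -/
structure Interlace (A B : ℕ → ℝ) (i j : ℕ → ℕ) : Prop where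
  mono_left : StrictMono A
  mono_right : StrictMono B
  ne : ∀ a b, A a ≠ B b
  add_eq : ∀ n, i n + j n = n
  lt_left : ∀ n, A (i n) < B (j n + 1)
  lt_right : ∀ n, B (j n) < A (i n + 1)

/-- The `n`-th term of the increasing rearrangement of `A` and `B`. -/
noncomputable def mergeTime (A B : ℕ → ℝ) (i j : ℕ → ℕ) (n : ℕ) : ℝ := max (A (i n)) (B (j n))

lemma mergeTime_comm (A B : ℕ → ℝ) (i j : ℕ → ℕ) : mergeTime A B i j = mergeTime B A j i :=
  funext fun _ => max_comm _ _

lemma exists_interlace {A B : ℕ → ℝ} (hA : StrictMono A) (hB : StrictMono B)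
    (hne : ∀ a b, A a ≠ B b) (h1 : A 0 < B 1) (h2 : B 0 < A 1) :
    ∃ i j, Interlace A B i j := by
  have h : ∀ n, ∃ a b, a + b = n ∧ A a < B (b + 1) ∧ B b < A (a + 1) := by
    intro n
    induction n with
    | zero => exact ⟨0, 0, rfl, h1, h2⟩
    | succ n ih =>
      obtain ⟨a, b, hab, hl, hr⟩ := ih
      rcases lt_or_gt_of_ne (hne (a + 1) (b + 1)) with hlt | hlt
      · exact ⟨a + 1, b, by omega, hlt, hr.trans (hA (Nat.lt_succ_self _))⟩
      · exact ⟨a, b + 1, by omega, hl.trans (hB (Nat.lt_succ_self _)), hlt⟩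
  choose i j hij using h
  exact ⟨i, j, hA, hB, hne, fun n => (hij n).1, fun n => (hij n).2.1, fun n => (hij n).2.2⟩

namespace Interlace

variable {A B : ℕ → ℝ} {i j : ℕ → ℕ}

lemma symm (h : Interlace A B i j) : Interlace B A j i where
  mono_left := h.mono_right
  mono_right := h.mono_left
  ne a b := (h.ne b a).symm
  add_eq n := by rw [add_comm]; exact h.add_eq n
  lt_left := h.lt_right
  lt_right := h.lt_left

lemma le_of_add_eq (h : Interlace A B i j) {a b n : ℕ} (hab : a + b = n)
    (hr : B b < A (a + 1)) : i n ≤ a := by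
  by_contra! hlt
  have hn := h.add_eq n
  have e1 : A (a + 1) ≤ A (i n) := h.mono_left.monotone hlt
  have e2 : B (j n + 1) ≤ B b := h.mono_right.monotone (by omega)
  linarith [h.lt_left n]

lemma eq_of_add_eq (h : Interlace A B i j) {a b n : ℕ} (hab : a + b = n)
    (hl : A a < B (b + 1)) (hr : B b < A (a + 1)) : i n = a ∧ j n = b := by
  have e1 := h.le_of_add_eq hab hr
  have e2 := h.symm.le_of_add_eq ((add_comm b a).trans hab) hl
  have := h.add_eq n
  omega

lemma step (h : Interlace A B i j) (n : ℕ) :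
    (i (n + 1) = i n + 1 ∧ j (n + 1) = j n ∧ A (i n + 1) < B (j n + 1)) ∨
      (i (n + 1) = i n ∧ j (n + 1) = j n + 1 ∧ B (j n + 1) < A (i n + 1)) := by
  have hn := h.add_eq n
  rcases lt_or_gt_of_ne (h.ne (i n + 1) (j n + 1)) with hlt | hlt
  · left
    have := h.eq_of_add_eq (a := i n + 1) (b := j n) (n := n + 1) (by omega) hlt
      ((h.lt_right n).trans (h.mono_left (Nat.lt_succ_self _)))
    exact ⟨this.1, this.2, hlt⟩
  · right
    have := h.eq_of_add_eq (a := i n) (b := j n + 1) (n := n + 1) (by omega)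
      ((h.lt_left n).trans (h.mono_right (Nat.lt_succ_self _))) hlt
    exact ⟨this.1, this.2, hlt⟩

lemma mergeTime_succ (h : Interlace A B i j) (n : ℕ) :
    mergeTime A B i j (n + 1) = min (A (i n + 1)) (B (j n + 1)) := by
  rcases h.step n with ⟨h1, h2, h3⟩ | ⟨h1, h2, h3⟩
  · rw [mergeTime, h1, h2, max_eq_left (h.lt_right n).le, min_eq_left h3.le]
  · rw [mergeTime, h1, h2, max_eq_right (h.lt_left n).le, min_eq_right h3.le]

lemma mergeTime_lt_succ (h : Interlace A B i j) (n : ℕ) :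
    mergeTime A B i j n < mergeTime A B i j (n + 1) := by
  rw [h.mergeTime_succ, mergeTime, max_lt_iff, lt_min_iff, lt_min_iff]
  exact ⟨⟨h.mono_left (Nat.lt_succ_self _), h.lt_left n⟩, h.lt_right n,
    h.mono_right (Nat.lt_succ_self _)⟩

lemma le_mergeTime (n : ℕ) : A (i n) ≤ mergeTime A B i j n := le_max_left _ _

lemma mergeTime_succ_le (h : Interlace A B i j) (n : ℕ) :
    mergeTime A B i j (n + 1) ≤ A (i n + 1) := by
  rw [h.mergeTime_succ]; exact min_le_left _ _

lemma add_period (h : Interlace A B i j) {a b : ℕ} {P : ℝ} (hA : ∀ c, A (c + a) = A c + P)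
    (hB : ∀ c, B (c + b) = B c + P) (n : ℕ) :
    i (n + (a + b)) = i n + a ∧ j (n + (a + b)) = j n + b := by
  have hn := h.add_eq n
  refine h.eq_of_add_eq (by omega) ?_ ?_
  · rw [show j n + b + 1 = j n + 1 + b by ring, hA, hB]
    linarith [h.lt_left n]
  · rw [show i n + a + 1 = i n + 1 + a by ring, hA, hB]
    linarith [h.lt_right n]

lemma exists_le (h : Interlace A B i j) {a b : ℕ} {P : ℝ} (ha : 0 < a)
    (hA : ∀ c, A (c + a) = A c + P) (hB : ∀ c, B (c + b) = B c + P) (N : ℕ) : ∃ n, N ≤ i n := by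
  induction N with
  | zero => exact ⟨0, Nat.zero_le _⟩
  | succ N ih =>
    obtain ⟨n, hn⟩ := ih
    exact ⟨n + (a + b), by rw [(h.add_period hA hB n).1]; omega⟩

/-- Every step of the first sequence is made at some time of the merged sequence. -/
lemma exists_step (h : Interlace A B i j) (hub : ∀ N, ∃ n, N ≤ i n) (a : ℕ) :
    ∃ n, i n = a ∧ i (n + 1) = a + 1 := by
  classical
  have hex := hub (a + 1)
  obtain ⟨n, hn⟩ : ∃ n, Nat.find hex = n + 1 := by
    refine Nat.exists_eq_succ_of_ne_zero fun h0 => ?_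
    have h1 := Nat.find_spec hex
    have h2 := h.add_eq 0
    rw [h0] at h1
    omega
  have h1 := Nat.find_spec hex
  rw [hn] at h1
  have h2 := Nat.find_min hex (show n < Nat.find hex by omega)
  rcases h.step n with h3 | h3 <;> exact ⟨n, by omega, by omega⟩

lemma iUnion_segment_index (h : Interlace A B i j) (hub : ∀ N, ∃ n, N ≤ i n)
    (x : ℕ → Fin n → ℝ) :
    ⋃ m, segment ℝ (x (i m)) (x (i (m + 1))) = ⋃ a, segment ℝ (x a) (x (a + 1)) := by
  apply Set.Subset.antisymm
  · refine Set.iUnion_subset fun m => ?_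
    refine Set.Subset.trans ?_ (Set.subset_iUnion (fun a => segment ℝ (x a) (x (a + 1))) (i m))
    rcases h.step m with ⟨h1, -⟩ | ⟨h1, -⟩
    · rw [h1]
    · rw [h1, segment_same, Set.singleton_subset_iff]
      exact left_mem_segment ℝ _ _
  · refine Set.iUnion_subset fun a => ?_
    obtain ⟨m, h1, h2⟩ := h.exists_step hub a
    refine Set.Subset.trans ?_
      (Set.subset_iUnion (fun m => segment ℝ (x (i m)) (x (i (m + 1)))) m)
    rw [h1, h2]

/-- If `p` moves linearly with velocity `-u a` between the times `A a` and `A (a + 1)`, then so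
does its position at the merged times. -/
lemma position_succ (h : Interlace A B i j) {p u : ℕ → Fin n → ℝ}
    (hp : ∀ a, p (a + 1) = p a - (A (a + 1) - A a) • u a) (m : ℕ) :
    p (i (m + 1)) - (mergeTime A B i j (m + 1) - A (i (m + 1))) • u (i (m + 1)) =
      p (i m) - (mergeTime A B i j (m + 1) - A (i m)) • u (i m) := by
  rcases h.step m with ⟨h1, h2, h3⟩ | ⟨h1, h2, h3⟩
  · have e : mergeTime A B i j (m + 1) = A (i m + 1) := by
      rw [h.mergeTime_succ, min_eq_left h3.le]
    rw [h1, e, hp]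
    simp
  · rw [h1]

lemma sub_smul_mem_segment {y u : Fin n → ℝ} {a b t : ℝ} (h1 : a ≤ t) (h2 : t ≤ b) :
    y - t • u ∈ segment ℝ (y - a • u) (y - b • u) := by
  let f : ℝ →ᵃ[ℝ] (Fin n → ℝ) :=
    AffineMap.const ℝ ℝ y - (LinearMap.toSpanSingleton ℝ _ u).toAffineMap
  have hf : ∀ s, f s = y - s • u := fun s => by simp [f]
  rw [← hf, ← hf, ← hf, ← image_segment, segment_eq_Icc (h1.trans h2)]
  exact ⟨t, ⟨h1, h2⟩, rfl⟩

lemma segment_sub_smul_subset {y u : Fin n → ℝ} {a b c d : ℝ} (h1 : c ≤ a) (h2 : a ≤ b)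
    (h3 : b ≤ d) :
    segment ℝ (y - a • u) (y - b • u) ⊆ segment ℝ (y - c • u) (y - d • u) :=
  (convex_segment _ _).segment_subset (sub_smul_mem_segment h1 (h2.trans h3))
    (sub_smul_mem_segment (h1.trans h2) h3)

lemma iUnion_segment_position (h : Interlace A B i j) (hub : ∀ N, ∃ n, N ≤ i n)
    {p u : ℕ → Fin n → ℝ} (hp : ∀ a, p (a + 1) = p a - (A (a + 1) - A a) • u a) {c : ℕ}
    (hc : 0 < c) (hper : ∀ a, p (a + c) = p a) {x : ℕ → Fin n → ℝ}
    (hx : ∀ m, x m = p (i m) - (mergeTime A B i j m - A (i m)) • u (i m)) :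
    ⋃ m, segment ℝ (x m) (x (m + 1)) = ⋃ a, segment ℝ (p a) (p (a + 1)) := by
  classical
  have hseg : ∀ m, segment ℝ (x m) (x (m + 1)) =
      segment ℝ (p (i m) - (mergeTime A B i j m - A (i m)) • u (i m))
        (p (i m) - (mergeTime A B i j (m + 1) - A (i m)) • u (i m)) := by
    intro m
    rw [hx m, hx (m + 1), h.position_succ hp]
  have hseg' : ∀ a, segment ℝ (p a) (p (a + 1)) =
      segment ℝ (p a - (0 : ℝ) • u a) (p a - (A (a + 1) - A a) • u a) := by
    intro a
    rw [hp a]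
    simp
  apply Set.Subset.antisymm
  · refine Set.iUnion_subset fun m => ?_
    refine Set.Subset.trans ?_ (Set.subset_iUnion (fun a => segment ℝ (p a) (p (a + 1))) (i m))
    rw [hseg, hseg']
    have e1 : A (i m) ≤ mergeTime A B i j m := le_mergeTime m
    have e2 := h.mergeTime_lt_succ m
    have e3 := h.mergeTime_succ_le m
    exact segment_sub_smul_subset (by linarith) (by linarith) (by linarith)
  · have key : ∀ a t, 0 < a → A a ≤ t → t < A (a + 1) →
        p a - (t - A a) • u a ∈ ⋃ m, segment ℝ (x m) (x (m + 1)) := by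
      intro a t ha h1 h2
      have hex : ∃ m, t < mergeTime A B i j m := by
        obtain ⟨m, hm⟩ := hub (a + 1)
        exact ⟨m, h2.trans_le ((h.mono_left.monotone hm).trans (le_mergeTime m))⟩
      obtain ⟨m, hm⟩ : ∃ m, Nat.find hex = m + 1 := by
        refine Nat.exists_eq_succ_of_ne_zero fun h0 => ?_
        have h3 := Nat.find_spec hex
        rw [h0] at h3
        have h4 := h.mergeTime_lt_succ 0
        have h5 := h.mergeTime_succ_le 0
        have h6 := h.add_eq 0
        have h7 : i 0 = 0 := by omega
        rw [h7] at h5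
        have h8 : A (0 + 1) ≤ A a := h.mono_left.monotone ha
        linarith
      have h3 := Nat.find_spec hex
      have h4 := Nat.find_min hex (show m < Nat.find hex by omega)
      rw [hm] at h3
      rw [not_lt] at h4
      have e1 : A (i m) ≤ mergeTime A B i j m := le_mergeTime m
      have e2 := h.mergeTime_succ_le m
      have e3 : i m < a + 1 := h.mono_left.lt_iff_lt.mp (by linarith)
      have e4 : a < i m + 1 := h.mono_left.lt_iff_lt.mp (by linarith)
      obtain rfl : a = i m := by omega
      refine Set.mem_iUnion.mpr ⟨m, ?_⟩
      rw [hseg]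
      exact sub_smul_mem_segment (by linarith) (by linarith)
    refine Set.iUnion_subset fun a => ?_
    have ea : segment ℝ (p a) (p (a + 1)) = segment ℝ (p (a + c)) (p (a + c + 1)) := by
      rw [hper, show a + c + 1 = a + 1 + c by ring, hper]
    rw [ea]
    rintro y hy
    rw [segment_eq_image'] at hy
    obtain ⟨θ, ⟨hθ0, hθ1⟩, rfl⟩ := hy
    have hlt : A (a + c) < A (a + c + 1) := h.mono_left (Nat.lt_succ_self _)
    rcases hθ1.lt_or_eq with hθ | rfl
    · have := key (a + c) (A (a + c) + θ * (A (a + c + 1) - A (a + c))) (by omega)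
        (by nlinarith) (by nlinarith)
      convert this using 1
      simp only [hp (a + c)]
      module
    · have := key (a + c + 1) (A (a + c + 1)) (by omega) le_rfl (h.mono_left (Nat.lt_succ_self _))
      simpa using this

end Interlace

end Interlace

section Combine

variable {k l : ℕ} {K V U : Set (Fin k → ℝ)} {L W Z : Set (Fin l → ℝ)}

lemma ClassicalTraj.position_mem_polarSet {n : ℕ} {A V U : Set (Fin n → ℝ)}
    (τ : ClassicalTraj n A (polarSet A)) (h : DualPair A (polarSet A) V U) {c : ℕ} {s : ℝ}
    (h0 : 0 ≤ s) (h1 : s ≤ τ.lam c) : τ.p c - s • τ.nq c ∈ polarSet A := by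
  have hmem := Interlace.sub_smul_mem_segment (y := τ.p c) (u := τ.nq c) h0 h1
  have e1 : τ.p c - τ.lam c • τ.nq c = τ.p (c + 1) := by
    rw [τ.p_succ, τ.time_succ, add_sub_cancel_left]
  rw [zero_smul, sub_zero, e1] at hmem
  exact h.symm.convex.segment_subset (τ.p_mem_polarSet h c) (τ.p_mem_polarSet h (c + 1)) hmem

/-- The trajectory in `(K ⊕₁ L) × (K ⊕₁ L)°` whose factors are `τ₁`, started at time `δ`, and
`τ₂`. -/
lemma exists_combined (hK : DualPair K (polarSet K) V U) (hL : DualPair L (polarSet L) W Z)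
    (τ₁ : ClassicalTraj k K (polarSet K)) (τ₂ : ClassicalTraj l L (polarSet L))
    {α : ℝ} (hα : α ∈ Set.Ioo (0 : ℝ) 1) {a b : ℕ} (ha : 0 < a)
    (hab : a * τ₁.time τ₁.m = b * τ₂.time τ₂.m) {δ : ℝ} {i j : ℕ → ℕ}
    (h : Interlace (fun c => τ₁.time c - δ) τ₂.time i j) :
    ∃ τ : ClassicalTraj (k + l) (sumOne K L) (polarSet (sumOne K L)),
      (∀ n, τ.q n = Fin.append (α • τ₁.q (i n)) ((1 - α) • τ₂.q (j n))) ∧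
      (∀ n, τ.p n = Fin.append
        (τ₁.p (i n) - (mergeTime (fun c => τ₁.time c - δ) τ₂.time i j n -
          (τ₁.time (i n) - δ)) • τ₁.nq (i n))
        (τ₂.p (j n) - (mergeTime (fun c => τ₁.time c - δ) τ₂.time i j n -
          τ₂.time (j n)) • τ₂.nq (j n))) := by
  set A : ℕ → ℝ := fun c => τ₁.time c - δ with hAdef
  set t := mergeTime A τ₂.time i j with ht
  set x : ℕ → Fin k → ℝ := fun n => τ₁.p (i n) - (t n - A (i n)) • τ₁.nq (i n) with hx
  set y : ℕ → Fin l → ℝ := fun n => τ₂.p (j n) - (t n - τ₂.time (j n)) • τ₂.nq (j n) with hy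
  have hAp : ∀ c, A (c + a * τ₁.m) = A c + a * τ₁.time τ₁.m := fun c => by
    simp only [hAdef, τ₁.time_add_mul]; ring
  have hBp : ∀ c, τ₂.time (c + b * τ₂.m) = τ₂.time c + a * τ₁.time τ₁.m := fun c => by
    rw [τ₂.time_add_mul, hab]
  have hper := h.add_period hAp hBp
  have htper : ∀ n, t (n + (a * τ₁.m + b * τ₂.m)) = t n + a * τ₁.time τ₁.m := fun n => by
    simp only [ht, mergeTime, (hper n).1, (hper n).2, hAp, hBp, max_add_add_right]
  have pmul : ∀ {d : ℕ} (f : ℕ → Fin d → ℝ) (m r c : ℕ), (∀ c, f (c + m) = f c) →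
      f (c + r * m) = f c := fun f m r c hf => by
    have hf' : Function.Periodic f m := hf
    exact hf'.nat_mul r c
  have hsA : ∀ n, 0 ≤ t n - A (i n) ∧ t n - A (i n) < τ₁.lam (i n) := fun n => by
    have e1 : A (i n) ≤ t n := Interlace.le_mergeTime n
    have e2 : t n < t (n + 1) := h.mergeTime_lt_succ n
    have e3 : t (n + 1) ≤ A (i n + 1) := h.mergeTime_succ_le n
    have e4 : A (i n + 1) = A (i n) + τ₁.lam (i n) := by
      simp only [hAdef, τ₁.time_succ]; ring
    constructor <;> linarith
  have hsB : ∀ n, 0 ≤ t n - τ₂.time (j n) ∧ t n - τ₂.time (j n) < τ₂.lam (j n) := fun n => by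
    have e1 : τ₂.time (j n) ≤ t n := le_max_right _ _
    have e2 : t n < t (n + 1) := h.mergeTime_lt_succ n
    have e3 : t (n + 1) ≤ τ₂.time (j n + 1) := by
      rw [ht, h.mergeTime_succ]; exact min_le_right _ _
    have e4 := τ₂.time_succ (j n)
    constructor <;> linarith
  have hxm : ∀ n, x n ∈ polarSet K := fun n =>
    τ₁.position_mem_polarSet hK (hsA n).1 (hsA n).2.le
  have hym : ∀ n, y n ∈ polarSet L := fun n =>
    τ₂.position_mem_polarSet hL (hsB n).1 (hsB n).2.le
  have hx_succ : ∀ n, x (n + 1) - x n = (-(t (n + 1) - t n)) • τ₁.nq (i n) := fun n => by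
    have e := h.position_succ (p := τ₁.p) (u := τ₁.nq)
      (fun c => by rw [τ₁.p_succ c]; simp [hAdef]) n
    simp only [hx]
    rw [e]
    module
  have hy_succ : ∀ n, y (n + 1) - y n = (-(t (n + 1) - t n)) • τ₂.nq (j n) := fun n => by
    have e := h.symm.position_succ (p := τ₂.p) (u := τ₂.nq) τ₂.p_succ n
    rw [mergeTime_comm] at e
    simp only [hy]
    rw [e]
    module
  have hnq : ∀ n, IsUniqueNormal (sumOne K L)
      (Fin.append (α • τ₁.q (i n)) ((1 - α) • τ₂.q (j n)))
      (Fin.append (τ₁.nq (i n)) (τ₂.nq (j n))) := fun n =>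
    isUniqueNormal_sumOne (τ₁.q_mem_set hK _) (τ₂.q_mem_set hL _) (τ₁.nq_spec _)
      (τ₂.nq_spec _) hα
  have hnp_left : ∀ n, τ₂.time (j n) < A (i n) →
      IsUniqueNormal (polarSet (sumOne K L)) (Fin.append (x n) (y n))
        (Fin.append (τ₁.np (i n)) 0) := fun n hlt => by
    have e : t n = A (i n) := max_eq_left hlt.le
    have ex : x n = τ₁.p (i n) := by simp [hx, e]
    rw [polarSet_sumOne, ex]
    exact isUniqueNormal_sumInfty_left hK hL (τ₁.p_mem_polarSet hK _) (τ₁.np_spec _)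
      fun c hc => τ₂.pairing_lt_one hL (by linarith) (hsB n).2 hc
  have hnp_right : ∀ n, A (i n) < τ₂.time (j n) →
      IsUniqueNormal (polarSet (sumOne K L)) (Fin.append (x n) (y n))
        (Fin.append 0 (τ₂.np (j n))) := fun n hlt => by
    have e : t n = τ₂.time (j n) := max_eq_right hlt.le
    have ey : y n = τ₂.p (j n) := by simp [hy, e]
    rw [polarSet_sumOne, ey]
    exact isUniqueNormal_sumInfty_right hK hL (τ₂.p_mem_polarSet hL _) (τ₂.np_spec _)
      fun c hc => τ₁.pairing_lt_one hK (by linarith) (hsA n).2 hc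
  have hnp : ∀ n, IsUniqueNormal (polarSet (sumOne K L)) (Fin.append (x n) (y n))
      (if τ₂.time (j n) < A (i n) then Fin.append (τ₁.np (i n)) 0
        else Fin.append 0 (τ₂.np (j n))) := fun n => by
    split_ifs with hlt
    · exact hnp_left n hlt
    · exact hnp_right n (lt_of_le_of_ne (not_lt.mp hlt) (h.ne _ _))
  refine ⟨{
    m := a * τ₁.m + b * τ₂.m
    m_pos := Nat.add_pos_left (Nat.mul_pos ha τ₁.m_pos) _
    q := fun n => Fin.append (α • τ₁.q (i n)) ((1 - α) • τ₂.q (j n))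
    p := fun n => Fin.append (x n) (y n)
    nq := fun n => Fin.append (τ₁.nq (i n)) (τ₂.nq (j n))
    np := fun n => if τ₂.time (j n) < A (i n) then Fin.append (τ₁.np (i n)) 0
        else Fin.append 0 (τ₂.np (j n))
    lam := fun n => t (n + 1) - t n
    mu := fun n => if A (i n + 1) < τ₂.time (j n + 1) then α * τ₁.mu (i n)
        else (1 - α) * τ₂.mu (j n)
    q_mem := fun n => mem_frontier_of_pairing_eq_one
      (append_mem_sumOne (τ₁.q_mem_set hK _) (τ₂.q_mem_set hL _) hα.1.le
        (sub_nonneg.mpr hα.2.le) (by ring)) (hnq n).1 (hnq n).2.1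
    p_mem := fun n => mem_frontier_of_pairing_eq_one
      (by rw [polarSet_sumOne]; exact ⟨by simpa using hxm n, by simpa using hym n⟩)
      (hnp n).1 (hnp n).2.1
    q_periodic := fun n => by
      simp only [(hper n).1, (hper n).2, pmul _ _ _ _ τ₁.q_periodic, pmul _ _ _ _ τ₂.q_periodic]
    p_periodic := fun n => by
      simp only [hx, hy, (hper n).1, (hper n).2, htper, hAp, hBp, pmul _ _ _ _ τ₁.p_periodic,
        pmul _ _ _ _ τ₂.p_periodic, pmul _ _ _ _ τ₁.nq_periodic, pmul _ _ _ _ τ₂.nq_periodic,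
        add_sub_add_right_eq_sub]
    nq_spec := hnq
    np_spec := hnp
    lam_pos := fun n => sub_pos.mpr (h.mergeTime_lt_succ n)
    mu_pos := fun n => by
      split_ifs
      · exact mul_pos hα.1 (τ₁.mu_pos _)
      · exact mul_pos (sub_pos.mpr hα.2) (τ₂.mu_pos _)
    reflection := fun n => ?_
    motion := fun n => ?_ }, fun n => rfl, fun n => rfl⟩
  · have e1 := hx_succ n
    have e2 := hy_succ n
    refine append_ext ?_ ?_
    · rw [← splitL_append (x (n + 1) - x n) (y (n + 1) - y n)] at e1
      ext c
      simpa [splitL] using congrFun e1 c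
    · rw [← splitR_append (x (n + 1) - x n) (y (n + 1) - y n)] at e2
      ext c
      simpa [splitR] using congrFun e2 c
  · rcases h.step n with ⟨h1, h2, h3⟩ | ⟨h1, h2, h3⟩
    · have h4 := h.lt_right n
      simp only [h1, h2, if_pos h3, if_pos h4]
      have e := τ₁.motion (i n)
      refine append_ext ?_ ?_
      · ext c
        have ec := congrFun e c
        simp only [Pi.sub_apply, Pi.smul_apply, smul_eq_mul] at ec
        simp [splitL, mul_assoc, ← ec, mul_sub]
      · ext c
        simp [splitR]
    · have h4 := h.lt_left n
      simp only [h1, h2, if_neg h3.not_gt, if_neg h4.not_gt]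
      have e := τ₂.motion (j n)
      refine append_ext ?_ ?_
      · ext c
        simp [splitL]
      · ext c
        have ec := congrFun e c
        simp only [Pi.sub_apply, Pi.smul_apply, smul_eq_mul] at ec
        simp [splitR, mul_assoc, ← ec, mul_sub]

lemma exists_common_multiple {x y : ℝ} (hx : 0 < x) (hy : 0 < y) (hxr : ∃ r : ℚ, x = r)
    (hyr : ∃ r : ℚ, y = r) : ∃ a b : ℕ, 0 < a ∧ 0 < b ∧ a * x = b * y := by
  obtain ⟨r, rfl⟩ := hxr
  obtain ⟨s, rfl⟩ := hyr
  have hr : 0 < r := by exact_mod_cast hx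
  have hs : 0 < s := by exact_mod_cast hy
  have hr' := Rat.num_pos.mpr hr
  have hs' := Rat.num_pos.mpr hs
  refine ⟨s.num.toNat * r.den, r.num.toNat * s.den, Nat.mul_pos (by omega) r.pos,
    Nat.mul_pos (by omega) s.pos, ?_⟩
  have e1 : ((r.num.toNat : ℕ) : ℚ) = r.num := by
    exact_mod_cast Int.toNat_of_nonneg hr'.le
  have e2 : ((s.num.toNat : ℕ) : ℚ) = s.num := by
    exact_mod_cast Int.toNat_of_nonneg hs'.le
  have key : ((s.num.toNat * r.den : ℕ) : ℚ) * r = ((r.num.toNat * s.den : ℕ) : ℚ) * s := by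
    push_cast
    rw [e1, e2, mul_assoc, mul_assoc, Rat.den_mul_eq_num, Rat.den_mul_eq_num, mul_comm]
  exact_mod_cast key

/-- Within a bounded interval, two sequences with a common period have finitely many
differences. -/
lemma finite_differences {A B : ℕ → ℝ} (hA : StrictMono A) (hB : StrictMono B) {a b : ℕ} {P : ℝ}
    (ha : 0 < a) (hb : 0 < b) (hP : 0 < P) (hAp : ∀ r c : ℕ, A (c + r * a) = A c + r * P)
    (hBp : ∀ r c : ℕ, B (c + r * b) = B c + r * P) (D : ℝ) :
    {δ : ℝ | |δ| ≤ D ∧ ∃ c d, δ = A c - B d}.Finite := by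
  obtain ⟨N, hN⟩ := exists_nat_ge ((D + (A a - A 0) + (B b - B 0) + |A 0 - B 0|) / P)
  rw [div_le_iff₀ hP] at hN
  refine ((Finset.range a ×ˢ Finset.range b ×ˢ Finset.Icc (-(N : ℤ)) N).finite_toSet.image
    (fun z : ℕ × ℕ × ℤ => A z.1 - B z.2.1 + z.2.2 * P)).subset ?_
  rintro δ ⟨hδ, c, d, rfl⟩
  have hc := hAp (c / a) (c % a)
  have hd := hBp (d / b) (d % b)
  rw [Nat.mod_add_div'] at hc hd
  have hca := Nat.mod_lt c ha
  have hdb := Nat.mod_lt d hb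
  have e1 : A 0 ≤ A (c % a) := hA.monotone (Nat.zero_le _)
  have e2 : A (c % a) ≤ A a := hA.monotone hca.le
  have e3 : B 0 ≤ B (d % b) := hB.monotone (Nat.zero_le _)
  have e4 : B (d % b) ≤ B b := hB.monotone hdb.le
  have e5 := abs_le.mp hδ
  have e6 := neg_abs_le (A 0 - B 0)
  have e7 := le_abs_self (A 0 - B 0)
  refine ⟨(c % a, d % b, ((c / a : ℕ) : ℤ) - ((d / b : ℕ) : ℤ)), ?_, ?_⟩
  · simp only [Finset.coe_product, Set.mem_prod, Finset.mem_coe, Finset.mem_range,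
      Finset.mem_Icc]
    refine ⟨hca, hdb, ?_, ?_⟩
    · have : (-(N : ℝ)) ≤ ((c / a : ℕ) : ℝ) - ((d / b : ℕ) : ℝ) := by
        refine le_of_mul_le_mul_right ?_ hP
        linarith
      exact_mod_cast this
    · have : ((c / a : ℕ) : ℝ) - ((d / b : ℕ) : ℝ) ≤ (N : ℝ) := by
        refine le_of_mul_le_mul_right ?_ hP
        linarith
      exact_mod_cast this
  · simp only [Int.cast_sub, Int.cast_natCast]
    linarith

lemma image_iUnion_segment {n m : ℕ} (f : (Fin n → ℝ) →ₗ[ℝ] (Fin m → ℝ))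
    (x : ℕ → Fin n → ℝ) :
    f '' (⋃ i, segment ℝ (x i) (x (i + 1))) = ⋃ i, segment ℝ (f (x i)) (f (x (i + 1))) := by
  rw [Set.image_iUnion]
  exact Set.iUnion_congr fun i => image_segment ℝ f.toAffineMap _ _

end Combine

end Billiard

open Billiard in
/-- Combination of billiard trajectories in Hanner configurations: given simple classical
trajectories `Q¹` in `K × K°` and `Q²` in `L × L°`, for every `α ∈ (0,1)` and all but
finitely many `β ∈ (0,1)`, the initial position `q₁ = (α q₁¹, (1−α) q₁²)`,
`p₁ = (β p₁¹ + (1−β) p₂¹, p₁²)` extends to a simple classical trajectory in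
`(K ⊕₁ L) × (K ⊕₁ L)°` whose coordinate line projects to translates of `α Q¹` and
`(1−α) Q²`, and whose momentum line projects to the momentum lines of `Q¹` and `Q²`. -/
theorem hanner_combined_trajectory (k l : ℕ)
    (K : Set (Fin k → ℝ)) (L : Set (Fin l → ℝ))
    (hK : IsHanner k K) (hL : IsHanner l L)
    (τ₁ : ClassicalTraj k K (polarSet K)) (hs₁ : τ₁.IsSimple) (hm₁ : τ₁.m = 2 * k)
    (τ₂ : ClassicalTraj l L (polarSet L)) (hs₂ : τ₂.IsSimple) (hm₂ : τ₂.m = 2 * l)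
    (α : ℝ) (hα : α ∈ Set.Ioo (0 : ℝ) 1) :
    ∃ S : Set ℝ, S.Finite ∧
      ∀ β ∈ Set.Ioo (0 : ℝ) 1, β ∉ S →
        ∃ τ : ClassicalTraj (k + l) (sumOne K L) (polarSet (sumOne K L)),
          τ.IsSimple ∧
          τ.q 0 = Fin.append (α • τ₁.q 0) ((1 - α) • τ₂.q 0) ∧
          τ.p 0 = Fin.append (β • τ₁.p 0 + (1 - β) • τ₁.p 1) (τ₂.p 0) ∧
          (∃ t : Fin k → ℝ,
            (splitL (k := k) (l := l)) '' τ.coordTrace =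
              (fun x => α • x + t) '' τ₁.coordTrace) ∧
          (∃ t : Fin l → ℝ,
            (splitR (k := k) (l := l)) '' τ.coordTrace =
              (fun x => (1 - α) • x + t) '' τ₂.coordTrace) ∧
          (splitL (k := k) (l := l)) '' τ.momTrace = τ₁.momTrace ∧
          (splitR (k := k) (l := l)) '' τ.momTrace = τ₂.momTrace := by
  obtain ⟨V, U, hK⟩ := hK.exists_dualPair
  obtain ⟨W, Z, hL⟩ := hL.exists_dualPair
  obtain ⟨a, b, ha, hb, hab⟩ := exists_common_multiple τ₁.time_m_pos τ₂.time_m_pos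
    (τ₁.exists_rat_time_m hK) (τ₂.exists_rat_time_m hL)
  have haR : (0 : ℝ) < a := by exact_mod_cast ha
  have hP : 0 < a * τ₁.time τ₁.m := mul_pos haR τ₁.time_m_pos
  have hA : ∀ r c : ℕ, τ₁.time (c + r * (a * τ₁.m)) = τ₁.time c + r * (a * τ₁.time τ₁.m) :=
    fun r c => by rw [← mul_assoc, τ₁.time_add_mul]; push_cast; ring
  have hB : ∀ r c : ℕ, τ₂.time (c + r * (b * τ₂.m)) = τ₂.time c + r * (a * τ₁.time τ₁.m) :=
    fun r c => by rw [hab, ← mul_assoc, τ₂.time_add_mul]; push_cast; ring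
  have ham := Nat.mul_pos ha τ₁.m_pos
  have hbm := Nat.mul_pos hb τ₂.m_pos
  have hfin := finite_differences τ₁.time_strictMono τ₂.time_strictMono ham hbm hP hA hB (τ₁.lam 0)
  have hlam := τ₁.lam_pos 0
  refine ⟨(fun β => (1 - β) * τ₁.lam 0) ⁻¹' _, hfin.preimage fun x _ y _ hxy => ?_, ?_⟩
  · have := mul_right_cancel₀ hlam.ne' hxy
    linarith
  rintro β ⟨hβ0, hβ1⟩ hβS
  set δ := (1 - β) * τ₁.lam 0 with hδ
  have hδ0 : 0 < δ := mul_pos (by linarith) hlam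
  have hδ1 : δ < τ₁.lam 0 := by nlinarith
  have hne : ∀ c d, τ₁.time c - δ ≠ τ₂.time d := by
    intro c d heq
    have hδcd : δ = τ₁.time c - τ₂.time d := by linarith
    exact hβS ⟨(abs_of_pos hδ0).trans_le hδ1.le, c, d, hδcd⟩
  have hmono : StrictMono fun c => τ₁.time c - δ := fun c d hcd =>
    sub_lt_sub_right (τ₁.time_strictMono hcd) δ
  have e1 : τ₁.time 1 = τ₁.lam 0 := by simp [ClassicalTraj.time]
  have e2 : τ₂.time 1 = τ₂.lam 0 := by simp [ClassicalTraj.time]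
  obtain ⟨i, j, h⟩ := exists_interlace hmono τ₂.time_strictMono hne
    (by simp only [τ₁.time_zero, e2]; linarith [τ₂.lam_pos 0])
    (by simp only [τ₂.time_zero, e1]; linarith)
  have hAp : ∀ c, τ₁.time (c + a * τ₁.m) - δ = τ₁.time c - δ + a * τ₁.time τ₁.m := fun c => by
    rw [τ₁.time_add_mul]; ring
  have hBp : ∀ c, τ₂.time (c + b * τ₂.m) = τ₂.time c + a * τ₁.time τ₁.m := fun c => by
    rw [τ₂.time_add_mul, hab]
  have hui := h.exists_le ham hAp hBp
  have huj := h.symm.exists_le hbm hBp hAp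
  obtain ⟨τ₀, hq₀, hp₀⟩ := exists_combined hK hL τ₁ τ₂ hα ha hab h
  obtain ⟨τ, hτ, hτq, hτp⟩ := τ₀.exists_isSimple
  rw [← hτq] at hq₀
  rw [← hτp] at hp₀
  have hi0 : i 0 = 0 := by have := h.add_eq 0; omega
  have hj0 : j 0 = 0 := by have := h.add_eq 0; omega
  refine ⟨τ, hτ, by rw [hq₀, hi0, hj0], ?_, ⟨0, ?_⟩, ⟨0, ?_⟩, ?_, ?_⟩
  · have ht : mergeTime (fun c => τ₁.time c - δ) τ₂.time i j 0 = 0 := by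
      simp [mergeTime, hi0, hj0, hδ0.le]
    rw [hp₀, ht, hi0, hj0]
    congr 1
    · rw [τ₁.p_succ 0, zero_add, e1, τ₁.time_zero, hδ]
      module
    · simp
  · have hx := h.iUnion_segment_index hui fun c => α • τ₁.q c
    rw [τ.coordTrace_eq, τ₁.coordTrace_eq]
    refine (image_iUnion_segment (splitLLin k l) τ.q).trans ?_
    simp only [splitLLin_apply, hq₀, splitL_append, hx, add_zero]
    exact (image_iUnion_segment (α • LinearMap.id) τ₁.q).symm
  · have hx := h.symm.iUnion_segment_index huj fun c => (1 - α) • τ₂.q c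
    rw [τ.coordTrace_eq, τ₂.coordTrace_eq]
    refine (image_iUnion_segment (splitRLin k l) τ.q).trans ?_
    simp only [splitRLin_apply, hq₀, splitR_append, hx, add_zero]
    exact (image_iUnion_segment ((1 - α) • LinearMap.id) τ₂.q).symm
  · rw [τ.momTrace_eq, τ₁.momTrace_eq]
    refine (image_iUnion_segment (splitLLin k l) τ.p).trans ?_
    refine h.iUnion_segment_position hui (u := τ₁.nq) (fun c => ?_) τ₁.m_pos τ₁.p_periodic
      fun m => ?_
    · rw [τ₁.p_succ]; simp
    · simp [hp₀]
  · rw [τ.momTrace_eq, τ₂.momTrace_eq]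
    refine (image_iUnion_segment (splitRLin k l) τ.p).trans ?_
    refine h.symm.iUnion_segment_position huj τ₂.p_succ τ₂.m_pos τ₂.p_periodic fun m => ?_
    rw [mergeTime_comm]
    simp [hp₀]
end
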